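/- arXiv:2209.01934 — 2 statements merged into one kernel-verified Lean document; each statement's English description precedes it below -/
import Mathlib

section
/- Asymptotics of the inhomogeneous prefactors in the strong non-unitarity regime (Lemma 3.4(a)). Under the strong non-unitarity setup, fix p > 0 and for z, w ∈ ℂ set ζ := p + z/√(Nδ), η := p + w/√(Nδ) with δ := ((n+L)/N)(1+p²)^{−2}. Define I_N(z,w) := (1+p²)^{−3}(Nδ)^{−2}(1+ζ²)^{−1}·(1+ζη)^{2n+2L−1}·((1+ζ²)(1+η²))^{−(n+L−1/2)}·(2n+2L+1)(n+L); II_N(z,w) := (1+p²)^{−3}(Nδ)^{−2}·ζ^{2N+2L}·(1+ζ²)^{−(n+L+1/2)}·π·Γ(2n+2L+2)/(2^{2n+2L}·Γ(N+L+1/2)·Γ(n−N)·Γ(n+L+1/2)); III_N(z,w) := (1+p²)^{−3}(Nδ)^{−2}·ζ^{2L−1}·(1+ζ²)^{−(n+L+1/2)}·π·Γ(2n+2L+2)/(2^{2n+2L}·Γ(n+1/2)·Γ(L)·Γ(n+L+1/2)), complex powers with non-integer exponents being principal branches. Then, uniformly for (z,w) in compact subsets of ℂ × ℂ as N → ∞: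 I_N(z,w) = 2e^{−(z−w)²} + O(N^{−1/2}); II_N(z,w) = √2·e^{−2z²} + O(N^{−1/2}) if p = r₂, while II_N(z,w) → 0 exponentially fast in N if p ≠ r₂; and III_N(z,w) = √2·e^{−2z²} + O(N^{−1/2}) if p = r₁, while III_N(z,w) → 0 exponentially fast in N if p ≠ r₁. -/
open MeasureTheory Filter Finset

noncomputable section

namespace SI

/-- The kernel `G_N(ζ,η)` built from the skew-orthogonal polynomials of the
symplectic induced spherical ensemble (all powers are principal-branch `cpow`s,
which agree with the integer powers whenever `2L` is a nonnegative integer). -/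
def GK (N : ℕ) (n L : ℝ) (ζ η : ℂ) : ℂ :=
  ((Real.pi : ℂ) * Complex.Gamma ((2*n+2*L+2 : ℝ) : ℂ) / (2:ℂ) ^ ((2*n+2*L+1 : ℝ) : ℂ)) *
  ∑ k ∈ range N, ∑ l ∈ range (k+1),
    ζ ^ ((2*k+2*L+1 : ℝ) : ℂ) * η ^ ((2*l+2*L : ℝ) : ℂ) /
      (Complex.Gamma ((k+L+3/2 : ℝ) : ℂ) * Complex.Gamma ((n-k : ℝ) : ℂ) *
       Complex.Gamma ((n-l+1/2 : ℝ) : ℂ) * Complex.Gamma ((l+L+1 : ℝ) : ℂ))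

/-- The skew-symmetric kernel `κ̂_N(ζ,η) = G_N(ζ,η) - G_N(η,ζ)`. -/
def KK (N : ℕ) (n L : ℝ) (ζ η : ℂ) : ℂ := GK N n L ζ η - GK N n L η ζ

/-- The density value `δ = ((n+L)/N)(1+p²)⁻²`. -/
def dlt (N : ℕ) (n L p : ℝ) : ℝ := ((n+L)/N) * (1+p^2)^(-2 : ℝ)

/-- `√(Nδ)`. -/
def sc (N : ℕ) (n L p : ℝ) : ℝ := Real.sqrt (N * dlt N n L p)

/-- The rescaled kernel `κ̃_N(z,w)`. -/
def resc (N : ℕ) (n L p : ℝ) (z w : ℂ) : ℂ :=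
  (((1+p^2) ^ (-3 : ℝ) : ℝ) : ℂ) * (((N * dlt N n L p) ^ (-(3/2) : ℝ) : ℝ) : ℂ) *
  ((1 + ((p:ℂ) + z / (sc N n L p : ℂ))^2) * (1 + ((p:ℂ) + w / (sc N n L p : ℂ))^2))
      ^ ((-(n+L-1/2) : ℝ) : ℂ) *
  KK N n L ((p:ℂ) + z / (sc N n L p : ℂ)) ((p:ℂ) + w / (sc N n L p : ℂ))

/-- The admissible system sizes in the strong non-unitarity regime:
positive `N` for which `L = aN` and `n = (b+1)N` are (nonnegative) integers. -/
def Sstrong (a b : ℝ) : Set ℕ :=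
  {N | 0 < N ∧ (∃ Lm : ℕ, (Lm : ℝ) = a*N) ∧ (∃ nm : ℕ, (nm : ℝ) = (b+1)*N)}

/-- The inner radius `r₁ = √(a/(b+1))`. -/
def rIn (a b : ℝ) : ℝ := Real.sqrt (a/(b+1))

/-- The outer radius `r₂ = √((1+a)/b)`. -/
def rOut (a b : ℝ) : ℝ := Real.sqrt ((1+a)/b)

/-- The rescaled zooming point `ζ = p + z/√(Nδ)`. -/
def zet (N : ℕ) (n L p : ℝ) (z : ℂ) : ℂ := (p:ℂ) + z / (sc N n L p : ℂ)

/-- The prefactor `I_N(z,w)` of Lemma 3.4. -/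
def IN (N : ℕ) (n L p : ℝ) (z w : ℂ) : ℂ :=
  (((1+p^2) ^ (-3 : ℝ) : ℝ) : ℂ) * ((((N : ℝ) * dlt N n L p) ^ (-2 : ℝ) : ℝ) : ℂ) *
  (1 + zet N n L p z ^ 2)⁻¹ *
  (1 + zet N n L p z * zet N n L p w) ^ ((2*n+2*L-1 : ℝ) : ℂ) *
  ((1 + zet N n L p z ^ 2) * (1 + zet N n L p w ^ 2)) ^ ((-(n+L-1/2) : ℝ) : ℂ) *
  (((2*n+2*L+1)*(n+L) : ℝ) : ℂ)

/-- The prefactor `II_N(z,w)` of Lemma 3.4. -/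
def IIN (N : ℕ) (n L p : ℝ) (z w : ℂ) : ℂ :=
  (((1+p^2) ^ (-3 : ℝ) : ℝ) : ℂ) * ((((N : ℝ) * dlt N n L p) ^ (-2 : ℝ) : ℝ) : ℂ) *
  zet N n L p z ^ ((2*(N:ℝ)+2*L : ℝ) : ℂ) *
  (1 + zet N n L p z ^ 2) ^ ((-(n+L+1/2) : ℝ) : ℂ) *
  ((Real.pi : ℂ) * Complex.Gamma ((2*n+2*L+2 : ℝ) : ℂ) /
    ((2:ℂ) ^ ((2*n+2*L : ℝ) : ℂ) * Complex.Gamma (((N:ℝ)+L+1/2 : ℝ) : ℂ) *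
      Complex.Gamma ((n-(N:ℝ) : ℝ) : ℂ) * Complex.Gamma ((n+L+1/2 : ℝ) : ℂ)))

/-- The prefactor `III_N(z,w)` of Lemma 3.4. -/
def IIIN (N : ℕ) (n L p : ℝ) (z w : ℂ) : ℂ :=
  (((1+p^2) ^ (-3 : ℝ) : ℝ) : ℂ) * ((((N : ℝ) * dlt N n L p) ^ (-2 : ℝ) : ℝ) : ℂ) *
  zet N n L p z ^ ((2*L-1 : ℝ) : ℂ) *
  (1 + zet N n L p z ^ 2) ^ ((-(n+L+1/2) : ℝ) : ℂ) *
  ((Real.pi : ℂ) * Complex.Gamma ((2*n+2*L+2 : ℝ) : ℂ) /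
    ((2:ℂ) ^ ((2*n+2*L : ℝ) : ℂ) * Complex.Gamma ((n+1/2 : ℝ) : ℂ) *
      Complex.Gamma ((L : ℝ) : ℂ) * Complex.Gamma ((n+L+1/2 : ℝ) : ℂ)))


/-! Stirling part -/

lemma stirl_upper (n : ℕ) (hn : n ≠ 0) :
    Real.log (Stirling.stirlingSeq n) ≤ Real.log Real.pi / 2 + 1 / (12 * n) := by
  have hmono : Monotone (fun k : ℕ => Real.log (Stirling.stirlingSeq (k+1)) - 1 / (12 * ((k:ℝ)+1))) := by
    apply monotone_nat_of_le_succ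
    intro k
    have h := Stirling.log_stirlingSeq_sdiff_le (k+1)
    push_cast at h ⊢
    have e : (1:ℝ) / (12 * ((k:ℝ)+1) * ((k:ℝ)+1+1)) = 1 / (12 * ((k:ℝ)+1)) - 1 / (12 * ((k:ℝ)+1+1)) := by
      field_simp; ring
    rw [e] at h
    linarith
  have hlim : Tendsto (fun k : ℕ => Real.log (Stirling.stirlingSeq (k+1)) - 1 / (12 * ((k:ℝ)+1)))
      atTop (nhds (Real.log (Real.sqrt Real.pi) - 0)) := by
    apply Tendsto.sub
    · have h1 := (tendsto_add_atTop_iff_nat 1).2 Stirling.tendsto_stirlingSeq_sqrt_pi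
      exact (Real.continuousAt_log (by positivity)).tendsto.comp h1
    · have h2 := (tendsto_one_div_add_atTop_nhds_zero_nat (𝕜 := ℝ)).const_mul (1/12)
      simp only [mul_zero] at h2
      refine h2.congr ?_
      intro k; field_simp
  obtain ⟨k, rfl⟩ := Nat.exists_eq_succ_of_ne_zero hn
  have := hmono.ge_of_tendsto hlim k
  rw [Real.log_sqrt Real.pi_pos.le] at this
  push_cast at this ⊢
  simp only [Nat.succ_eq_add_one] at *
  linarith

lemma stirl (n : ℕ) (hn : n ≠ 0) :
    |Real.log (n.factorial) - (n * Real.log n - n + Real.log n / 2 + Real.log (2*Real.pi) / 2)|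
      ≤ 1 / (12 * n) := by
  have h1 := stirl_upper n hn
  have h2 := Stirling.le_log_factorial_stirling hn
  have hn' : (0:ℝ) < n := by positivity
  rw [Stirling.log_stirlingSeq_formula, Real.log_div (by positivity) (by positivity), Real.log_exp,
    Real.log_mul (by positivity) (by positivity)] at h1
  rw [Real.log_mul (by positivity) (by positivity)] at h2 ⊢
  have : (0:ℝ) < 1 / (12 * n) := by positivity
  rw [abs_le]
  constructor <;> nlinarith

lemma gamma_half_log (k : ℕ) (hk : k ≠ 0) :
    Real.log (Real.Gamma (k + 1/2)) =
      Real.log ((2*k).factorial) - 2 * k * Real.log 2 + Real.log Real.pi / 2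
        - Real.log (k.factorial) := by
  have h := Real.Gamma_mul_Gamma_add_half ((k:ℝ) + 1/2)
  have e1 : (k:ℝ) + 1/2 + 1/2 = k + 1 := by ring
  have e2 : 2 * ((k:ℝ) + 1/2) = ((2*k : ℕ):ℝ) + 1 := by push_cast; ring
  have e3 : 1 - (((2*k : ℕ):ℝ) + 1) = -(2*k) := by push_cast; ring
  rw [e1, e2, e3, Real.Gamma_nat_eq_factorial, Real.Gamma_nat_eq_factorial] at h
  have hG : 0 < Real.Gamma ((k:ℝ) + 1/2) := Real.Gamma_pos_of_pos (by positivity)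
  have h' := congrArg Real.log h
  have f1 : (0:ℝ) < k.factorial := by exact_mod_cast Nat.factorial_pos _
  have f2 : (0:ℝ) < (2*k).factorial := by exact_mod_cast Nat.factorial_pos _
  rw [Real.log_mul hG.ne' f1.ne', Real.log_mul (by positivity) (by positivity),
    Real.log_mul f2.ne' (by positivity), Real.log_rpow (by norm_num),
    Real.log_sqrt Real.pi_pos.le] at h'
  linarith

/-- the Gamma quotient -/
def RR (x y : ℝ) : ℝ := Real.pi * Real.Gamma (2*(x+y)+2) /
    ((2:ℝ) ^ (2*(x+y)) * Real.Gamma (x+1/2) * Real.Gamma y * Real.Gamma (x+y+1/2))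

lemma RR_pos (x y : ℝ) (hx : 0 < x) (hy : 0 < y) : 0 < RR x y := by
  have h1 : 0 < Real.Gamma (2*(x+y)+2) := Real.Gamma_pos_of_pos (by positivity)
  have h2 : 0 < Real.Gamma (x+1/2) := Real.Gamma_pos_of_pos (by positivity)
  have h3 : 0 < Real.Gamma (x+y+1/2) := Real.Gamma_pos_of_pos (by positivity)
  have h4 : 0 < Real.Gamma y := Real.Gamma_pos_of_pos (by positivity)
  unfold RR; positivity

set_option maxHeartbeats 1000000 in
lemma RR_log (x y : ℕ) (hx : x ≠ 0) (hy : y ≠ 0) :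
    |Real.log (RR x y) - (Real.log 2 / 2 + 3/2 * Real.log (x+y) + Real.log y / 2
      + (x+y) * Real.log (x+y) - x * Real.log x - y * Real.log y)| ≤ 2 / (x:ℝ) + 2 / y := by
  have hx' : (0:ℝ) < x := by positivity
  have hy' : (0:ℝ) < y := by positivity
  obtain ⟨y', rfl⟩ := Nat.exists_eq_succ_of_ne_zero hy
  set M := x + y'.succ with hM
  have hM0 : M ≠ 0 := by omega
  have hM' : (0:ℝ) < M := by positivity
  have cM : (x:ℝ) + (y'.succ : ℕ) = M := by rw [hM]; push_cast; ring
  have gy : Real.Gamma ((y'.succ : ℕ) : ℝ) = (y'.factorial : ℝ) := by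
    push_cast; exact Real.Gamma_nat_eq_factorial y'
  have ly : Real.log ((y'.succ).factorial) = Real.log (y'.succ : ℕ) + Real.log (y'.factorial) := by
    rw [Nat.factorial_succ]; push_cast
    rw [Real.log_mul (by positivity) (by positivity)]
  have gM : Real.Gamma (2*(M:ℝ)+2) = ((2*M+1) * ((2*M).factorial) : ℝ) := by
    have : 2*(M:ℝ)+2 = ((2*M+1 : ℕ):ℝ) + 1 := by push_cast; ring
    rw [this, Real.Gamma_nat_eq_factorial, Nat.factorial_succ]; push_cast; ring
  have p1 : 0 < Real.Gamma ((x:ℝ)+1/2) := Real.Gamma_pos_of_pos (by positivity)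
  have p2 : 0 < Real.Gamma ((M:ℝ)+1/2) := Real.Gamma_pos_of_pos (by positivity)
  have hlog : Real.log (RR x (y'.succ : ℕ)) = Real.log Real.pi / 2 + Real.log (2*M+1)
      + Real.log (M.factorial) - Real.log (Real.Gamma ((x:ℝ)+1/2))
      - Real.log ((y'.succ).factorial) + Real.log (y'.succ : ℕ) := by
    unfold RR
    rw [cM, gM, gy, Real.log_div (by positivity) (by positivity), Real.log_mul (by positivity) (by positivity),
      Real.log_mul (by positivity) (by positivity), Real.log_mul (by positivity) (by positivity),
      Real.log_mul (by positivity) (by positivity), Real.log_mul (by positivity) (by positivity),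
      Real.log_rpow (by norm_num), gamma_half_log M hM0, ly]
    ring
  rw [hlog, gamma_half_log x hx, cM]
  have s1 := stirl M hM0
  have s2 := stirl x hx
  have s3 := stirl (2*x) (by omega)
  have s4 := stirl y'.succ hy
  push_cast at s3
  rw [Real.log_mul (by norm_num) hx'.ne'] at s3
  have hpi : Real.log (2*Real.pi) = Real.log 2 + Real.log Real.pi :=
    Real.log_mul (by norm_num) Real.pi_pos.ne'
  rw [hpi] at s1 s2 s3 s4
  have hl1 : Real.log (2*M+1) ≤ Real.log 2 + Real.log M + 1/(2*M) := by
    have : (2*(M:ℝ)+1) = 2 * (M * (1 + 1/(2*M))) := by field_simp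
    rw [this, Real.log_mul (by norm_num) (by positivity), Real.log_mul (by positivity) (by positivity)]
    have := Real.log_le_sub_one_of_pos (show (0:ℝ) < 1 + 1/(2*M) by positivity)
    linarith
  have hl2 : Real.log 2 + Real.log M ≤ Real.log (2*M+1) := by
    rw [← Real.log_mul (by norm_num) (by positivity)]
    exact Real.log_le_log (by positivity) (by linarith)
  have b1 : 1/(2*(M:ℝ)) ≤ 1/(2*x) := by
    apply one_div_le_one_div_of_le (by positivity)
    have : (x:ℝ) ≤ M := by rw [← cM]; linarith
    linarith
  have b2 : 1/(12*(M:ℝ)) = 1/6 * (1/(2*M)) := by field_simp; norm_num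
  have b3 : 1/(12*(2*(x:ℝ))) = 1/12 * (1/(2*x)) := by field_simp
  have b4 : 1/(12*(x:ℝ)) = 1/6*(1/(2*x)) := by field_simp; norm_num
  have b5 : 2/(x:ℝ) = 4*(1/(2*x)) := by field_simp; norm_num
  have b6 : 1/(12*((y'.succ:ℕ):ℝ)) = 1/24 * (2 / ((y'.succ:ℕ):ℝ)) := by field_simp; norm_num
  have b7 : 0 < 2 / ((y'.succ:ℕ):ℝ) := by positivity
  have b8 : 0 < 1/(2*(x:ℝ)) := by positivity
  rw [b2] at s1
  rw [b4] at s2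
  rw [b3] at s3
  rw [b6] at s4
  rw [b5]
  rw [abs_le] at s1 s2 s3 s4 ⊢
  clear hlog ly gy gM p1 p2 hpi 
  obtain ⟨s1a, s1b⟩ := s1
  obtain ⟨s2a, s2b⟩ := s2
  obtain ⟨s3a, s3b⟩ := s3
  obtain ⟨s4a, s4b⟩ := s4
  constructor <;> linarith

lemma RR_log_scaled (X Y : ℝ) (hX : 0 < X) (hY : 0 < Y) (N : ℕ) (hN : 0 < N) (x y : ℕ)
    (hx : (x:ℝ) = X * N) (hy : (y:ℝ) = Y * N) :
    |Real.log (RR (X*N) (Y*N)) - (Real.log 2 / 2 + 3/2 * Real.log (X+Y) + Real.log Y / 2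
      + 2 * Real.log N
      + N * ((X+Y) * Real.log (X+Y) - X * Real.log X - Y * Real.log Y))| ≤ (2 / X + 2 / Y) / N := by
  have hN' : (0:ℝ) < N := by exact_mod_cast hN
  have hx0 : x ≠ 0 := by
    intro h; rw [h] at hx; push_cast at hx; have : 0 < X * N := by positivity
    linarith
  have hy0 : y ≠ 0 := by
    intro h; rw [h] at hy; push_cast at hy; have : 0 < Y * N := by positivity
    linarith
  have h := RR_log x y hx0 hy0
  rw [hx, hy, ← add_mul, Real.log_mul (by positivity) (by positivity),
    Real.log_mul (by positivity) (by positivity), Real.log_mul (by positivity) (by positivity)] at h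
  have e : 2 / (X * N) + 2 / (Y * N) = (2 / X + 2 / Y) / N := by field_simp
  rw [e] at h
  convert h using 2
  ring

/-! asymptotic calculus on `ℕ × ℂ × ℂ` -/

open Asymptotics

/-- the filter: `N → ∞` in `S`, uniformly on `K` -/
def FL (S : Set ℕ) (K : Set (ℂ × ℂ)) : Filter (ℕ × (ℂ × ℂ)) := (atTop ⊓ 𝓟 S) ×ˢ 𝓟 K

/-- the small parameter -/
def ep (N : ℕ) : ℝ := (Real.sqrt N)⁻¹

lemma FL_ev {S : Set ℕ} {K : Set (ℂ × ℂ)} {P : ℕ → ℂ × ℂ → Prop}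
    (h : ∀ᶠ N : ℕ in atTop ⊓ 𝓟 S, ∀ q ∈ K, P N q) : ∀ᶠ q in FL S K, P q.1 q.2 := by
  unfold FL
  rw [Filter.eventually_prod_principal_iff]
  exact h

lemma ev_FL {S : Set ℕ} {K : Set (ℂ × ℂ)} {P : ℕ → ℂ × ℂ → Prop}
    (h : ∀ᶠ q in FL S K, P q.1 q.2) : ∀ᶠ N : ℕ in atTop ⊓ 𝓟 S, ∀ q ∈ K, P N q := by
  unfold FL at h
  rw [Filter.eventually_prod_principal_iff] at h
  exact h

lemma FL_S {S : Set ℕ} {K : Set (ℂ × ℂ)} : ∀ᶠ q in FL S K, q.1 ∈ S ∧ 0 < q.1 ∧ q.2 ∈ K := by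
  refine FL_ev (P := fun N q => N ∈ S ∧ 0 < N ∧ q ∈ K) ?_
  have h1 : ∀ᶠ N : ℕ in atTop ⊓ 𝓟 S, N ∈ S :=
    (eventually_principal.2 (fun x hx => hx)).filter_mono inf_le_right
  have h2 : ∀ᶠ N : ℕ in atTop ⊓ 𝓟 S, 0 < N := (eventually_gt_atTop 0).filter_mono inf_le_left
  filter_upwards [h1, h2] with N a b q hq using ⟨a, b, hq⟩

lemma ep_tendsto {S : Set ℕ} {K : Set (ℂ × ℂ)} :
    Tendsto (fun q : ℕ × (ℂ × ℂ) => ep q.1) (FL S K) (nhds 0) := by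
  have h1 : Tendsto ep atTop (nhds 0) :=
    tendsto_inv_atTop_zero.comp (Real.tendsto_sqrt_atTop.comp tendsto_natCast_atTop_atTop)
  exact (h1.mono_left inf_le_left).comp tendsto_fst

lemma ep_pos {N : ℕ} (h : 0 < N) : 0 < ep N := by unfold ep; positivity

lemma ep_le {N : ℕ} : ep N ≤ 1 := by
  unfold ep
  rcases Nat.eq_zero_or_pos N with h | h
  · simp [h]
  · apply inv_le_one_of_one_le₀
    rw [Real.one_le_sqrt]; exact_mod_cast h

lemma ep_nonneg {N : ℕ} : 0 ≤ ep N := by unfold ep; positivity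

lemma ep_sq {N : ℕ} (h : 0 < N) : (N:ℝ) * ep N ^ 2 = 1 := by
  unfold ep
  rw [inv_pow, Real.sq_sqrt (by positivity)]
  exact mul_inv_cancel₀ (by positivity)

lemma bdd {S : Set ℕ} {K : Set (ℂ × ℂ)} (hK : IsCompact K) (F : ℝ × (ℂ × ℂ) → ℂ)
    (hF : Continuous F) :
    (fun q : ℕ × (ℂ × ℂ) => F (ep q.1, q.2)) =O[FL S K] (fun _ => (1:ℝ)) := by
  obtain ⟨C, hC⟩ := ((isCompact_Icc (a := (0:ℝ)) (b := 1)).prod hK).exists_bound_of_continuousOn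
    hF.continuousOn
  refine IsBigO.of_bound C ?_
  filter_upwards [FL_S] with q hq
  simpa using hC (ep q.1, q.2) ⟨⟨ep_nonneg, ep_le⟩, hq.2.2⟩

lemma bdd_ep {S : Set ℕ} {K : Set (ℂ × ℂ)} (hK : IsCompact K) (F : ℝ × (ℂ × ℂ) → ℂ)
    (hF : Continuous F) :
    (fun q : ℕ × (ℂ × ℂ) => (ep q.1 : ℂ) * F (ep q.1, q.2)) =O[FL S K] (fun q => ep q.1) := by
  have h : (fun q : ℕ × (ℂ × ℂ) => (ep q.1 : ℂ)) =O[FL S K] (fun q => ep q.1) :=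
    IsBigO.of_bound 1 (Eventually.of_forall (fun q => by simp))
  simpa using h.mul (bdd hK F hF)

lemma log2 {S : Set ℕ} {K : Set (ℂ × ℂ)} {x : ℕ × (ℂ × ℂ) → ℂ}
    (hx : x =O[FL S K] (fun q => ep q.1)) :
    (fun q => Complex.log (1 + x q) - (x q - x q ^ 2 / 2)) =O[FL S K] (fun q => ep q.1 ^ 3) := by
  have ht : Tendsto x (FL S K) (nhds 0) := hx.trans_tendsto ep_tendsto
  have h1 : (fun q => Complex.log (1 + x q) - (x q - x q ^ 2 / 2)) =O[FL S K] (fun q => x q ^ 3) := by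
    refine IsBigO.of_bound 1 ?_
    have : ∀ᶠ q in FL S K, ‖x q‖ < 1/2 := by
      have := ht.norm
      rw [norm_zero] at this
      exact this.eventually_lt_const (by norm_num)
    filter_upwards [this] with q hq
    have h := Complex.norm_log_sub_logTaylor_le 2 (show ‖x q‖ < 1 by linarith)
    have e : Complex.logTaylor (2+1) (x q) = x q - x q ^ 2 / 2 := by
      simp [Complex.logTaylor, Finset.sum_range_succ]; ring
    rw [e] at h
    refine h.trans ?_
    have h3 : (1 - ‖x q‖)⁻¹ ≤ 2 := by
      rw [inv_le_comm₀ (by linarith) (by norm_num)]; linarith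
    have h4 : 0 ≤ ‖x q‖ ^ 3 := by positivity
    rw [norm_pow]
    norm_num
    nlinarith
  exact h1.trans (hx.pow 3)

lemma log1 {S : Set ℕ} {K : Set (ℂ × ℂ)} {x : ℕ × (ℂ × ℂ) → ℂ}
    (hx : x =O[FL S K] (fun q => ep q.1)) :
    (fun q => Complex.log (1 + x q)) =O[FL S K] (fun q => ep q.1) := by
  have h := log2 hx
  have h3 : ∀ k : ℕ, 1 ≤ k → (fun q : ℕ × (ℂ × ℂ) => ep q.1 ^ k) =O[FL S K] (fun q => ep q.1) := by
    intro k hk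
    refine IsBigO.of_bound 1 (Eventually.of_forall (fun q => ?_))
    rw [Real.norm_of_nonneg (pow_nonneg ep_nonneg _), Real.norm_of_nonneg ep_nonneg, one_mul]
    calc ep q.1 ^ k ≤ ep q.1 ^ 1 := pow_le_pow_of_le_one ep_nonneg ep_le hk
      _ = _ := pow_one _
  have h4 : (fun q => (x q - x q ^ 2 / 2)) =O[FL S K] (fun q => ep q.1) := by
    refine hx.sub ?_
    have := ((hx.pow 2).trans (h3 2 (by norm_num))).const_mul_left (1/2)
    refine this.congr_left (fun q => by ring)
  exact ((h.trans (h3 3 (by norm_num))).add h4).congr_left (fun q => by ring)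

lemma natmul3 {S : Set ℕ} {K : Set (ℂ × ℂ)} {x : ℕ × (ℂ × ℂ) → ℂ}
    (hx : x =O[FL S K] (fun q => ep q.1 ^ 3)) :
    (fun q => (q.1 : ℂ) * x q) =O[FL S K] (fun q => ep q.1) := by
  have h : (fun q : ℕ × (ℂ × ℂ) => (q.1 : ℂ)) =O[FL S K] (fun q => (q.1 : ℝ)) :=
    IsBigO.of_bound 1 (Eventually.of_forall (fun q => by simp))
  refine (h.mul hx).congr' EventuallyEq.rfl ?_
  filter_upwards [FL_S] with q hq
  have := ep_sq hq.2.1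
  calc (q.1:ℝ) * ep q.1 ^ 3 = ((q.1:ℝ) * ep q.1 ^ 2) * ep q.1 := by ring
    _ = _ := by rw [this, one_mul]

lemma invN {S : Set ℕ} {K : Set (ℂ × ℂ)} {x : ℕ × (ℂ × ℂ) → ℂ} (C : ℝ)
    (hx : ∀ᶠ q in FL S K, ‖x q‖ ≤ C / q.1) : x =O[FL S K] (fun q => ep q.1) := by
  refine IsBigO.of_bound |C| ?_
  filter_upwards [hx, FL_S] with q h1 hq
  refine h1.trans ?_
  rw [Real.norm_of_nonneg ep_nonneg]
  have h2 := ep_sq hq.2.1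
  have hN : (0:ℝ) < q.1 := by exact_mod_cast hq.2.1
  have h3 : C / q.1 = C * (ep q.1 * ep q.1) := by
    rw [div_eq_iff hN.ne']; linear_combination (-C) * h2
  rw [h3]
  have := ep_nonneg (N := q.1)
  have h5 := ep_le (N := q.1)
  calc C * (ep q.1 * ep q.1) ≤ |C| * (ep q.1 * 1) := by
        gcongr
        exact le_abs_self C
    _ = _ := by ring

lemma exp_asymp {S : Set ℕ} {K : Set (ℂ × ℂ)} (E E0 : ℕ × (ℂ × ℂ) → ℂ)
    (hE : (fun q => E q - E0 q) =O[FL S K] (fun q => ep q.1))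
    (h0 : (fun q => Complex.exp (E0 q)) =O[FL S K] (fun _ => (1:ℝ))) :
    (fun q => Complex.exp (E q) - Complex.exp (E0 q)) =O[FL S K] (fun q => ep q.1) := by
  have ht : Tendsto (fun q => E q - E0 q) (FL S K) (nhds 0) := hE.trans_tendsto ep_tendsto
  have h1 : (fun q => Complex.exp (E q - E0 q) - 1) =O[FL S K] (fun q => E q - E0 q) := by
    refine IsBigO.of_bound 2 ?_
    have : ∀ᶠ q in FL S K, ‖E q - E0 q‖ < 1 := by
      have := ht.norm
      rw [norm_zero] at this
      exact this.eventually_lt_const (by norm_num)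
    filter_upwards [this] with q hq
    exact Complex.norm_exp_sub_one_le hq.le
  have h2 := h0.mul (h1.trans hE)
  simp only [one_mul] at h2
  refine h2.congr_left (fun q => ?_)
  rw [mul_sub, ← Complex.exp_add]; simp

lemma final_bigO {S : Set ℕ} {K : Set (ℂ × ℂ)} (f : ℕ → ℂ × ℂ → ℂ)
    (h : (fun q : ℕ × (ℂ × ℂ) => f q.1 q.2) =O[FL S K] (fun q => ep q.1)) :
    ∃ C : ℝ, ∀ᶠ N : ℕ in atTop ⊓ 𝓟 S, ∀ q ∈ K, ‖f N q‖ ≤ C / Real.sqrt N := by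
  obtain ⟨C, hC⟩ := h.bound
  refine ⟨C, ev_FL (P := fun N q => ‖f N q‖ ≤ C / Real.sqrt N) ?_⟩
  filter_upwards [hC] with q hq
  rw [Real.norm_of_nonneg ep_nonneg] at hq
  rw [div_eq_mul_inv]; exact hq

/-! the exponent asymptotics -/

lemma cpow_real_mul (r : ℝ) (hr : 0 < r) (x : ℂ) (hx : 1 + x ≠ 0) (s : ℂ) :
    ((r:ℂ) * (1 + x)) ^ s = Complex.exp (s * (Real.log r + Complex.log (1 + x))) := by
  rw [Complex.cpow_def_of_ne_zero (mul_ne_zero (by exact_mod_cast hr.ne') hx),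
    Complex.log_ofReal_mul hr hx, mul_comm]

lemma one_add_ne {S : Set ℕ} {K : Set (ℂ × ℂ)} {x : ℕ × (ℂ × ℂ) → ℂ}
    (hx : x =O[FL S K] (fun q => ep q.1)) : ∀ᶠ q in FL S K, 1 + x q ≠ 0 := by
  have ht : Tendsto x (FL S K) (nhds 0) := hx.trans_tendsto ep_tendsto
  have := ht.norm
  rw [norm_zero] at this
  filter_upwards [this.eventually_lt_const (show (0:ℝ) < 1 by norm_num)] with q hq h
  have : x q = -1 := by linear_combination h
  rw [this] at hq
  simp at hq

/-- `x = c ε z / p` -/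
def xx (p c : ℝ) (q : ℕ × (ℂ × ℂ)) : ℂ := (ep q.1 : ℂ) * ((c / p : ℂ) * q.2.1)
/-- `α` -/
def al (p c : ℝ) (q : ℕ × (ℂ × ℂ)) : ℂ :=
  (ep q.1 : ℂ) * ((2 * p * c * q.2.1 + c^2 * ep q.1 * q.2.1^2) / (1 + p^2))

lemma xx_O {S : Set ℕ} {K : Set (ℂ × ℂ)} (hK : IsCompact K) (p c : ℝ) :
    xx p c =O[FL S K] (fun q => ep q.1) :=
  bdd_ep hK (fun t => (c / p : ℂ) * t.2.1) (by fun_prop)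

lemma al_O {S : Set ℕ} {K : Set (ℂ × ℂ)} (hK : IsCompact K) (p c : ℝ) :
    al p c =O[FL S K] (fun q => ep q.1) :=
  bdd_ep hK (fun t => (2 * p * c * t.2.1 + c^2 * t.1 * t.2.1^2) / (1 + p^2)) (by fun_prop)

/-- the `z`-dependent exponent -/
def DD (p c m k κ : ℝ) (q : ℕ × (ℂ × ℂ)) : ℂ :=
  (2 * (k * q.1) - κ) * Complex.log (1 + xx p c q) - (m * q.1 + 1/2) * Complex.log (1 + al p c q)

lemma sqA (p : ℝ) : (1 + (p:ℂ)^2) ≠ 0 := by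
  have : (0:ℝ) < 1 + p^2 := by positivity
  exact_mod_cast this.ne'

lemma DD_crit {S : Set ℕ} {K : Set (ℂ × ℂ)} (hK : IsCompact K) (p c m k κ : ℝ) (hp : 0 < p)
    (hc : m * c^2 = (1+p^2)^2) (hk : k * (1+p^2) = m * p^2) :
    (fun q => DD p c m k κ q - (-2 * q.2.1^2)) =O[FL S K] (fun q => ep q.1) := by
  have hx := xx_O (S := S) hK p c
  have ha := al_O (S := S) hK p c
  have t1 := (natmul3 (log2 hx)).const_mul_left (2 * k : ℂ)
  have t2 := (natmul3 (log2 ha)).const_mul_left (m : ℂ)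
  have t3 := (log1 hx).const_mul_left (κ : ℂ)
  have t4 := (log1 ha).const_mul_left (1/2 : ℂ)
  have t5 := bdd_ep (S := S) hK (fun t => (m / (2 * (1+p^2)^2) : ℂ) *
    (4 * p * c^3 * t.2.1^3 + c^4 * t.2.1^4 * t.1)) (by fun_prop)
  refine ((((t1.sub t2).sub t3).sub t4).add t5).congr' ?_ EventuallyEq.rfl
  filter_upwards [FL_S] with q hq
  have he : (q.1 : ℂ) * (ep q.1 : ℂ)^2 = 1 := by exact_mod_cast ep_sq hq.2.1
  have hc' : (m:ℂ) * c^2 = (1+p^2)^2 := by exact_mod_cast hc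
  have hk' : (k:ℂ) * (1+p^2) = m * p^2 := by exact_mod_cast hk
  have hp' : (p:ℂ) ≠ 0 := by exact_mod_cast hp.ne'
  have hA := sqA p
  have hkk : (k:ℂ) = m * p^2 / (1+p^2) := by field_simp; linear_combination hk'
  have key : (q.1:ℂ) * (2 * k * (xx p c q - xx p c q ^2 / 2) - m * (al p c q - al p c q ^ 2 / 2))
      + 2 * q.2.1^2 = (ep q.1 : ℂ) * ((m / (2 * (1+p^2)^2) : ℂ) *
    (4 * p * c^3 * q.2.1^3 + c^4 * q.2.1^4 * ep q.1)) := by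
    have e1 : 2 * k * (xx p c q - xx p c q ^2 / 2) - m * (al p c q - al p c q ^ 2 / 2)
       = (ep q.1:ℂ)^2 * (- (2 * (m * c^2) / (1+p^2)^2) * q.2.1^2) + (ep q.1:ℂ)^2 * ((ep q.1 : ℂ) * ((m / (2 * (1+p^2)^2) : ℂ) *
    (4 * p * c^3 * q.2.1^3 + c^4 * q.2.1^4 * ep q.1))) := by
      rw [hkk]; unfold xx al
      field_simp
      ring
    rw [e1, hc', mul_add, ← mul_assoc, ← mul_assoc (q.1:ℂ), he]
    field_simp
    ring
  unfold DD
  rw [← key]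
  ring

lemma DD_any {S : Set ℕ} {K : Set (ℂ × ℂ)} (hK : IsCompact K) (p c m k κ : ℝ) :
    ∃ C : ℝ, ∀ᶠ q in FL S K, ‖DD p c m k κ q‖ ≤ C * (q.1 * ep q.1) := by
  have hx := log1 (xx_O (S := S) hK p c)
  have ha := log1 (al_O (S := S) hK p c)
  have hN : ∀ u v : ℝ, (fun q : ℕ × (ℂ × ℂ) => (u * q.1 + v : ℂ)) =O[FL S K] (fun q => (q.1 : ℝ)) := by
    intro u v
    refine IsBigO.of_bound (|u| + |v|) ?_
    filter_upwards [FL_S] with q hq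
    have : (1:ℝ) ≤ q.1 := by exact_mod_cast hq.2.1
    refine (norm_add_le _ _).trans ?_
    simp only [norm_mul, Complex.norm_real, Complex.norm_natCast, Real.norm_eq_abs, Nat.abs_cast]
    nlinarith [abs_nonneg v]
  have h := ((hN (2*k) (-κ)).mul hx).sub ((hN m (1/2)).mul ha)
  obtain ⟨C, hC⟩ := h.bound
  refine ⟨C, ?_⟩
  filter_upwards [hC] with q hq
  rw [Real.norm_of_nonneg (mul_nonneg (by positivity) ep_nonneg)] at hq
  have e : DD p c m k κ q = (((2*k : ℝ):ℂ) * q.1 + ((-κ : ℝ):ℂ)) * Complex.log (1 + xx p c q)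
      - ((m:ℂ) * q.1 + ((1/2 : ℝ):ℂ)) * Complex.log (1 + al p c q) := by
    unfold DD
    push_cast
    ring
  rw [e]; exact hq

/-! general prefactor -/

/-- general form of II and III -/
def GG (p c m k κ X Y : ℝ) (q : ℕ × (ℂ × ℂ)) : ℂ :=
  (((1+p^2) / (m * q.1)^2 : ℝ) : ℂ) * ((p:ℂ) * (1 + xx p c q)) ^ ((2*(k*q.1) - κ : ℝ) : ℂ) *
  (((1+p^2 : ℝ):ℂ) * (1 + al p c q)) ^ ((-(m*q.1+1/2) : ℝ) : ℂ) * (RR (X*q.1) (Y*q.1) : ℂ)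

/-- constant exponent -/
def E0 (p m κ Y : ℝ) : ℝ := Real.log 2 / 2 + Real.log (1+p^2) / 2 + Real.log Y / 2
  - Real.log m / 2 - κ * Real.log p

/-- linear rate -/
def hh (p m k X Y : ℝ) : ℝ := (m * Real.log m - X * Real.log X - Y * Real.log Y)
  + 2 * k * Real.log p - m * Real.log (1+p^2)

/-- Stirling error -/
def er (m X Y : ℝ) (N : ℕ) : ℝ :=
  Real.log (RR (X*N) (Y*N)) - (Real.log 2 / 2 + 3/2 * Real.log m + Real.log Y / 2
      + 2 * Real.log N
      + N * (m * Real.log m - X * Real.log X - Y * Real.log Y))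

lemma GG_exp {S : Set ℕ} {K : Set (ℂ × ℂ)} (hK : IsCompact K) (p c m k κ X Y : ℝ) (hp : 0 < p)
    (hX : 0 < X) (hY : 0 < Y) (hm : m = X + Y) :
    ∀ᶠ q in FL S K, GG p c m k κ X Y q =
      Complex.exp (((E0 p m κ Y : ℝ) : ℂ) + q.1 * (hh p m k X Y : ℝ) + DD p c m k κ q
        + (er m X Y q.1 : ℝ)) := by
  filter_upwards [FL_S, one_add_ne (xx_O (S := S) hK p c), one_add_ne (al_O (S := S) hK p c)]
    with q hq h1 h2
  have hN : (0:ℝ) < q.1 := by exact_mod_cast hq.2.1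
  have hm0 : 0 < m := by rw [hm]; positivity
  have hA : (0:ℝ) < 1 + p^2 := by positivity
  unfold GG
  rw [cpow_real_mul p hp _ h1, cpow_real_mul (1+p^2) hA _ h2,
    ← Real.exp_log (RR_pos (X*q.1) (Y*q.1) (by positivity) (by positivity)),
    ← Real.exp_log (show 0 < (1+p^2) / (m * q.1)^2 by positivity),
    Complex.ofReal_exp, Complex.ofReal_exp, ← Complex.exp_add, ← Complex.exp_add,
    ← Complex.exp_add, Real.log_div (by positivity) (by positivity), Real.log_pow,
    Real.log_mul (by positivity) (by positivity)]
  congr 1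
  unfold DD er E0 hh
  push_cast
  ring

lemma er_O {S : Set ℕ} {K : Set (ℂ × ℂ)} (m X Y : ℝ)
    (hX : 0 < X) (hY : 0 < Y) (hm : m = X + Y)
    (hS : ∀ N ∈ S, (∃ x : ℕ, (x:ℝ) = X * N) ∧ (∃ y : ℕ, (y:ℝ) = Y * N)) :
    ∀ᶠ q in FL S K, ‖((er m X Y q.1 : ℝ):ℂ)‖ ≤ (2/X + 2/Y) / q.1 := by
  filter_upwards [FL_S] with q hq
  obtain ⟨⟨x, hx⟩, ⟨y, hy⟩⟩ := hS _ hq.1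
  have := RR_log_scaled X Y hX hY q.1 hq.2.1 x y hx hy
  rw [Complex.norm_real, Real.norm_eq_abs]
  unfold er
  rw [hm]
  exact this

lemma GG_crit {S : Set ℕ} {K : Set (ℂ × ℂ)} (hK : IsCompact K) (p c m k κ X Y : ℝ) (hp : 0 < p)
    (hX : 0 < X) (hY : 0 < Y) (hm : m = X + Y)
    (hS : ∀ N ∈ S, (∃ x : ℕ, (x:ℝ) = X * N) ∧ (∃ y : ℕ, (y:ℝ) = Y * N))
    (hc : m * c^2 = (1+p^2)^2) (hk : k * (1+p^2) = m * p^2)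
    (hE : E0 p m κ Y = Real.log 2 / 2) (hh0 : hh p m k X Y = 0) :
    (fun q => GG p c m k κ X Y q - (Real.sqrt 2 : ℂ) * Complex.exp (-2*q.2.1^2))
      =O[FL S K] (fun q => ep q.1) := by
  have hb : (fun q : ℕ × (ℂ × ℂ) => Complex.exp (-2*q.2.1^2)) =O[FL S K] (fun _ => (1:ℝ)) :=
    bdd (S := S) hK (fun t => Complex.exp (-2*t.2.1^2)) (by fun_prop)
  have h1 := exp_asymp (S := S) (K := K) (fun q => DD p c m k κ q + (er m X Y q.1 : ℝ))
    (fun q => -2*q.2.1^2)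
    (((DD_crit (S := S) hK p c m k κ hp hc hk).add
      (invN _ (er_O (K := K) m X Y hX hY hm hS))).congr_left (fun q => by ring)) hb
  refine (h1.const_mul_left (Real.sqrt 2 : ℂ)).congr' ?_ EventuallyEq.rfl
  filter_upwards [GG_exp (S := S) hK p c m k κ X Y hp hX hY hm] with q hq
  rw [hq, hE, hh0]
  have : (Real.sqrt 2 : ℂ) = Complex.exp ((Real.log 2 / 2 : ℝ) : ℂ) := by
    rw [← Complex.ofReal_exp, ← Real.log_sqrt (by norm_num), Real.exp_log (by positivity)]
  rw [mul_sub, this, ← Complex.exp_add]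
  congr 2
  push_cast
  ring

lemma GG_non {S : Set ℕ} {K : Set (ℂ × ℂ)} (hK : IsCompact K) (p c m k κ X Y : ℝ) (hp : 0 < p)
    (hX : 0 < X) (hY : 0 < Y) (hm : m = X + Y)
    (hS : ∀ N ∈ S, (∃ x : ℕ, (x:ℝ) = X * N) ∧ (∃ y : ℕ, (y:ℝ) = Y * N))
    (hneg : hh p m k X Y < 0) :
    ∃ d : ℝ, 0 < d ∧ ∃ C : ℝ, ∀ᶠ q in FL S K, ‖GG p c m k κ X Y q‖ ≤ C * Real.exp (-d * q.1) := by
  obtain ⟨C, hC⟩ := DD_any (S := S) hK p c m k κ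
  refine ⟨- hh p m k X Y / 2, by linarith, Real.exp (E0 p m κ Y + (2/X + 2/Y)), ?_⟩
  have hsm : ∀ᶠ q in FL S K, C * ep q.1 < - hh p m k X Y / 2 := by
    have := (ep_tendsto (S := S) (K := K)).const_mul C
    rw [mul_zero] at this
    exact this.eventually_lt_const (by linarith)
  filter_upwards [GG_exp (S := S) hK p c m k κ X Y hp hX hY hm, hC, hsm, FL_S,
    er_O (K := K) m X Y hX hY hm hS] with q h1 h2 h3 h4 h5
  rw [h1, Complex.norm_exp, ← Real.exp_add]
  apply Real.exp_le_exp.2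
  have hN : (1:ℝ) ≤ q.1 := by exact_mod_cast h4.2.1
  have r1 : (DD p c m k κ q).re ≤ C * (q.1 * ep q.1) := (Complex.re_le_norm _).trans h2
  have r2 : er m X Y q.1 ≤ 2/X + 2/Y := by
    rw [Complex.norm_real, Real.norm_eq_abs] at h5
    refine (le_abs_self _).trans (h5.trans (div_le_self (by positivity) hN))
  have r3 : (((E0 p m κ Y : ℝ) : ℂ) + q.1 * (hh p m k X Y : ℝ) + DD p c m k κ q
        + (er m X Y q.1 : ℝ)).re = E0 p m κ Y + q.1 * hh p m k X Y + (DD p c m k κ q).re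
          + er m X Y q.1 := by
    simp
  rw [r3]
  have : C * (q.1 * ep q.1) ≤ (- hh p m k X Y / 2) * q.1 := by
    calc C * (q.1 * ep q.1) = (C * ep q.1) * q.1 := by ring
      _ ≤ _ := by gcongr
  linarith

lemma hh_symm (p m k X Y : ℝ) : hh p m k X Y = hh p m k Y X := by unfold hh; ring

lemma hh_zero (p k j : ℝ) (hp : 0 < p) (hk : 0 < k) (hj : 0 < j) (h : p^2 = k / j) :
    hh p (k+j) k k j = 0 := by
  have h1 : 2 * Real.log p = Real.log k - Real.log j := by
    rw [← Real.log_div hk.ne' hj.ne', ← h, Real.log_pow]; norm_num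
  have h2 : Real.log (1+p^2) = Real.log (k+j) - Real.log j := by
    rw [← Real.log_div (by positivity) hj.ne', h]; congr 1; field_simp; ring
  unfold hh
  rw [h2]
  linear_combination k * h1

lemma hh_neg (p k j : ℝ) (hp : 0 < p) (hk : 0 < k) (hj : 0 < j) (h : p^2 ≠ k / j) :
    hh p (k+j) k k j < 0 := by
  have hA : (0:ℝ) < 1 + p^2 := by positivity
  have e1 : Real.log (p^2 * (k+j) / ((1+p^2)*k)) =
      2 * Real.log p + Real.log (k+j) - Real.log (1+p^2) - Real.log k := by
    rw [Real.log_div (by positivity) (by positivity), Real.log_mul (by positivity) (by positivity),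
      Real.log_mul (by positivity) (by positivity), Real.log_pow]; push_cast; ring
  have e2 : Real.log ((k+j) / ((1+p^2)*j)) =
      Real.log (k+j) - Real.log (1+p^2) - Real.log j := by
    rw [Real.log_div (by positivity) (by positivity),
      Real.log_mul (by positivity) (by positivity)]; ring
  have i1 : Real.log (p^2 * (k+j) / ((1+p^2)*k)) < p^2 * (k+j) / ((1+p^2)*k) - 1 := by
    apply Real.log_lt_sub_one_of_pos (by positivity)
    intro h'
    apply h
    rw [div_eq_one_iff_eq (by positivity)] at h'
    rw [eq_div_iff hj.ne']
    linear_combination h'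
  have i2 : Real.log ((k+j) / ((1+p^2)*j)) ≤ (k+j) / ((1+p^2)*j) - 1 :=
    Real.log_le_sub_one_of_pos (by positivity)
  have e : hh p (k+j) k k j = k * Real.log (p^2 * (k+j) / ((1+p^2)*k))
      + j * Real.log ((k+j) / ((1+p^2)*j)) := by
    rw [e1, e2]; unfold hh; ring
  have s : k * (p^2 * (k+j) / ((1+p^2)*k) - 1) + j * ((k+j) / ((1+p^2)*j) - 1) = 0 := by
    field_simp; ring
  rw [e]
  nlinarith [mul_lt_mul_of_pos_left i1 hk, mul_le_mul_of_nonneg_left i2 hj.le]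

/-! bridging with the frozen definitions -/

lemma pre_eq (a b p : ℝ) (N : ℕ) (hN : 0 < N) (ha : 0 ≤ a) (hb : 0 < b) :
    (1+p^2) ^ (-3 : ℝ) * ((N:ℝ) * dlt N ((b+1)*N) (a*N) p) ^ (-2 : ℝ)
      = (1+p^2) / ((a+b+1) * N)^2 := by
  have hN' : (0:ℝ) < N := by exact_mod_cast hN
  have hA : (0:ℝ) < 1 + p^2 := by positivity
  unfold dlt
  have e : ∀ x : ℝ, 0 < x → x ^ (-2:ℝ) = (x^2)⁻¹ := by
    intro x hx; rw [Real.rpow_neg hx.le]; norm_cast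
  have e3 : ∀ x : ℝ, 0 < x → x ^ (-3:ℝ) = (x^3)⁻¹ := by
    intro x hx; rw [Real.rpow_neg hx.le]; norm_cast
  rw [e _ hA, e3 _ hA, e _ (by positivity)]
  field_simp
  ring

lemma sc_eq (a b p : ℝ) (N : ℕ) (hN : 0 < N) (ha : 0 ≤ a) (hb : 0 < b) :
    (sc N ((b+1)*N) (a*N) p)⁻¹ = ep N * ((1+p^2) / Real.sqrt (a+b+1)) := by
  have hN' : (0:ℝ) < N := by exact_mod_cast hN
  have hA : (0:ℝ) < 1 + p^2 := by positivity
  have e : (N:ℝ) * dlt N ((b+1)*N) (a*N) p = (Real.sqrt N * Real.sqrt (a+b+1) / (1+p^2))^2 := by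
    unfold dlt
    rw [Real.rpow_neg hA.le, div_pow, mul_pow, Real.sq_sqrt hN'.le, Real.sq_sqrt (by positivity)]
    norm_cast
    push_cast
    field_simp
    ring
  unfold sc ep
  rw [e, Real.sqrt_sq (by positivity)]
  have : 0 < Real.sqrt (a+b+1) := by positivity
  field_simp

lemma zet_eq (a b p : ℝ) (hp : 0 < p) (q : ℕ × (ℂ × ℂ)) (hN : 0 < q.1) (ha : 0 ≤ a) (hb : 0 < b) :
    zet q.1 ((b+1)*q.1) (a*q.1) p q.2.1 = (p:ℂ) * (1 + xx p ((1+p^2) / Real.sqrt (a+b+1)) q) := by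
  unfold zet xx
  rw [div_eq_mul_inv q.2.1, ← Complex.ofReal_inv, sc_eq a b p _ hN ha hb]
  have hp' : (p:ℂ) ≠ 0 := by exact_mod_cast hp.ne'
  rw [Complex.ofReal_mul]
  field_simp

lemma one_zet_eq (a b p : ℝ) (hp : 0 < p) (q : ℕ × (ℂ × ℂ)) (hN : 0 < q.1) (ha : 0 ≤ a) (hb : 0 < b) :
    1 + zet q.1 ((b+1)*q.1) (a*q.1) p q.2.1 ^ 2 =
      ((1+p^2 : ℝ) : ℂ) * (1 + al p ((1+p^2) / Real.sqrt (a+b+1)) q) := by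
  rw [zet_eq a b p hp q hN ha hb]
  generalize (1+p^2) / Real.sqrt (a+b+1) = c
  have hp' : (p:ℂ) ≠ 0 := by exact_mod_cast hp.ne'
  have hA := sqA p
  unfold xx al
  push_cast
  field_simp
  ring

lemma IIN_eq (a b p : ℝ) (hp : 0 < p) (q : ℕ × (ℂ × ℂ)) (hN : 0 < q.1) (ha : 0 ≤ a) (hb : 0 < b) :
    IIN q.1 ((b+1)*q.1) (a*q.1) p q.2.1 q.2.2 =
      GG p ((1+p^2) / Real.sqrt (a+b+1)) (a+b+1) (1+a) 0 (1+a) b q := by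
  unfold IIN GG
  rw [one_zet_eq a b p hp q hN ha hb, zet_eq a b p hp q hN ha hb, ← Complex.ofReal_mul,
    pre_eq a b p _ hN ha hb]
  have e1 : 2*(q.1:ℝ)+2*(a*q.1) = 2*((1+a)*q.1) - 0 := by ring
  have e2 : (b+1)*(q.1:ℝ)+a*q.1+1/2 = (a+b+1)*q.1+1/2 := by ring
  have e3 : ((Real.pi : ℂ) * Complex.Gamma ((2*((b+1)*q.1)+2*(a*q.1)+2 : ℝ) : ℂ) /
    ((2:ℂ) ^ ((2*((b+1)*q.1)+2*(a*q.1) : ℝ) : ℂ) * Complex.Gamma (((q.1:ℝ)+a*q.1+1/2 : ℝ) : ℂ) *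
      Complex.Gamma (((b+1)*q.1-(q.1:ℝ) : ℝ) : ℂ) * Complex.Gamma (((b+1)*q.1+a*q.1+1/2 : ℝ) : ℂ)))
      = (RR ((1+a)*q.1) (b*q.1) : ℂ) := by
    rw [Complex.Gamma_ofReal, Complex.Gamma_ofReal, Complex.Gamma_ofReal, Complex.Gamma_ofReal]
    unfold RR
    have h2 : (2:ℂ) = ((2:ℝ):ℂ) := by norm_num
    rw [h2, ← Complex.ofReal_cpow (by norm_num)]
    norm_cast
    ring_nf
  rw [e3, e1, e2]

lemma IIIN_eq (a b p : ℝ) (hp : 0 < p) (q : ℕ × (ℂ × ℂ)) (hN : 0 < q.1) (ha : 0 ≤ a) (hb : 0 < b) :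
    IIIN q.1 ((b+1)*q.1) (a*q.1) p q.2.1 q.2.2 =
      GG p ((1+p^2) / Real.sqrt (a+b+1)) (a+b+1) a 1 (b+1) a q := by
  unfold IIIN GG
  rw [one_zet_eq a b p hp q hN ha hb, zet_eq a b p hp q hN ha hb, ← Complex.ofReal_mul,
    pre_eq a b p _ hN ha hb]
  have e2 : (b+1)*(q.1:ℝ)+a*q.1+1/2 = (a+b+1)*q.1+1/2 := by ring
  have e3 : ((Real.pi : ℂ) * Complex.Gamma ((2*((b+1)*q.1)+2*(a*q.1)+2 : ℝ) : ℂ) /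
    ((2:ℂ) ^ ((2*((b+1)*q.1)+2*(a*q.1) : ℝ) : ℂ) * Complex.Gamma (((b+1)*q.1+1/2 : ℝ) : ℂ) *
      Complex.Gamma ((a*q.1 : ℝ) : ℂ) * Complex.Gamma (((b+1)*q.1+a*q.1+1/2 : ℝ) : ℂ)))
      = (RR ((b+1)*q.1) (a*q.1) : ℂ) := by
    rw [Complex.Gamma_ofReal, Complex.Gamma_ofReal, Complex.Gamma_ofReal, Complex.Gamma_ofReal]
    unfold RR
    have h2 : (2:ℂ) = ((2:ℝ):ℂ) := by norm_num
    rw [h2, ← Complex.ofReal_cpow (by norm_num)]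
    norm_cast
    ring_nf
  rw [e3, e2]

/-! the prefactor I -/

/-- `κ` -/
def ka (p c : ℝ) (q : ℕ × (ℂ × ℂ)) : ℂ :=
  (ep q.1 : ℂ) * ((p * c * (q.2.1 + q.2.2) + c^2 * ep q.1 * q.2.1 * q.2.2) / (1 + p^2))

/-- `γ` -/
def ga (p c : ℝ) (q : ℕ × (ℂ × ℂ)) : ℂ :=
  (ep q.1 : ℂ) * ((2 * p * c * q.2.1 + c^2 * ep q.1 * q.2.1^2) / (1 + p^2)
    + (2 * p * c * q.2.2 + c^2 * ep q.1 * q.2.2^2) / (1 + p^2)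
    + ep q.1 * ((2 * p * c * q.2.1 + c^2 * ep q.1 * q.2.1^2) / (1 + p^2)
      * ((2 * p * c * q.2.2 + c^2 * ep q.1 * q.2.2^2) / (1 + p^2))))

lemma ka_O {S : Set ℕ} {K : Set (ℂ × ℂ)} (hK : IsCompact K) (p c : ℝ) :
    ka p c =O[FL S K] (fun q => ep q.1) :=
  bdd_ep hK (fun t => (p * c * (t.2.1 + t.2.2) + c^2 * t.1 * t.2.1 * t.2.2) / (1 + p^2))
    (by fun_prop)

lemma ga_O {S : Set ℕ} {K : Set (ℂ × ℂ)} (hK : IsCompact K) (p c : ℝ) :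
    ga p c =O[FL S K] (fun q => ep q.1) :=
  bdd_ep hK (fun t => ((2 * p * c * t.2.1 + c^2 * t.1 * t.2.1^2) / (1 + p^2)
    + (2 * p * c * t.2.2 + c^2 * t.1 * t.2.2^2) / (1 + p^2)
    + t.1 * ((2 * p * c * t.2.1 + c^2 * t.1 * t.2.1^2) / (1 + p^2)
      * ((2 * p * c * t.2.2 + c^2 * t.1 * t.2.2^2) / (1 + p^2)))))
    (by fun_prop)

/-- remainder polynomial -/
def FF (p c m : ℝ) (t : ℝ × (ℂ × ℂ)) : ℂ :=
  let z := t.2.1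
  let w := t.2.2
  let A : ℂ := 1 + p^2
  let e : ℂ := t.1
  let P : ℂ := p * c * (z+w) / A
  let Q : ℂ := c^2 * z * w / A
  let g1 : ℂ := c^2 * (z^2+w^2) / A + 4*p^2*c^2*z*w/A^2
  let g2 : ℂ := 2*p*c^3*(z*w^2+w*z^2)/A^2 + e * c^4*z^2*w^2/A^2
  let h : ℂ := g1 + e * g2
  m * (-2*P*Q - e*Q^2 - g2 + 2*P*h + e*h^2/2)

lemma FF_cont (p c m : ℝ) : Continuous (FF p c m) := by
  unfold FF
  fun_prop

lemma poly_I (p c m e z w : ℂ) (hA : 1 + p^2 ≠ 0) :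
    let A : ℂ := 1 + p^2
    let P : ℂ := p * c * (z+w) / A
    let Q : ℂ := c^2 * z * w / A
    let g1 : ℂ := c^2 * (z^2+w^2) / A + 4*p^2*c^2*z*w/A^2
    let g2 : ℂ := 2*p*c^3*(z*w^2+w*z^2)/A^2 + e * c^4*z^2*w^2/A^2
    let h : ℂ := g1 + e * g2
    let κ : ℂ := e * ((p * c * (z+w) + c^2 * e * z * w) / (1 + p^2))
    let γ : ℂ := e * ((2 * p * c * z + c^2 * e * z^2) / (1 + p^2)
    + (2 * p * c * w + c^2 * e * w^2) / (1 + p^2)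
    + e * ((2 * p * c * z + c^2 * e * z^2) / (1 + p^2)
      * ((2 * p * c * w + c^2 * e * w^2) / (1 + p^2))))
    m * (2 * (κ - κ^2/2) - (γ - γ^2/2)) =
      e^2 * (-(m * c^2) / (1+p^2)^2 * (z-w)^2) + e^2 * (e * (m * (-2*P*Q - e*Q^2 - g2 + 2*P*h + e*h^2/2))) := by
  intro A P Q g1 g2 h κ γ
  have hκ : κ = e * (P + e * Q) := by simp only [κ, P, Q, A]; field_simp
  have hγ : γ = e * (2 * P + e * h) := by
    simp only [γ, P, h, g1, g2, A]; field_simp; ring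
  have h1 : 2 * Q + P^2 - g1 = -c^2/(1+p^2)^2 * (z-w)^2 := by
    simp only [P, Q, g1, A]; field_simp; ring
  rw [hκ, hγ]
  linear_combination (m * e^2) * h1

/-- exponent of I -/
def EI (p c m : ℝ) (q : ℕ × (ℂ × ℂ)) : ℂ :=
  Complex.log (1 + ((1 / (2 * m * q.1) : ℝ) : ℂ)) - Complex.log (1 + al p c q)
  + (2 * (m * q.1) - 1) * Complex.log (1 + ka p c q)
  - (m * q.1 - 1/2) * Complex.log (1 + ga p c q)

lemma nu_O {S : Set ℕ} {K : Set (ℂ × ℂ)} (m : ℝ) (hm : 0 < m) :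
    (fun q : ℕ × (ℂ × ℂ) => ((1 / (2 * m * q.1) : ℝ) : ℂ)) =O[FL S K] (fun q => ep q.1) := by
  refine invN (1 / (2*m)) (Eventually.of_forall (fun q => ?_))
  rw [Complex.norm_real, Real.norm_of_nonneg (by positivity)]
  rw [div_div]

lemma EI_O {S : Set ℕ} {K : Set (ℂ × ℂ)} (hK : IsCompact K) (p c m : ℝ) (hm : 0 < m)
    (hc : m * c^2 = (1+p^2)^2) :
    (fun q => EI p c m q - (-(q.2.1 - q.2.2)^2)) =O[FL S K] (fun q => ep q.1) := by
  have hx := ka_O (S := S) hK p c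
  have hg := ga_O (S := S) hK p c
  have ha := al_O (S := S) hK p c
  have t1 := (natmul3 (log2 hx)).const_mul_left (2 * m : ℂ)
  have t2 := (natmul3 (log2 hg)).const_mul_left (m : ℂ)
  have t3 := (log1 hx)
  have t4 := (log1 hg).const_mul_left (1/2 : ℂ)
  have t5 := bdd_ep (S := S) hK (FF p c m) (FF_cont p c m)
  have t6 := (log1 (nu_O (S := S) (K := K) m hm)).sub (log1 ha)
  refine (((((t1.sub t2).sub t3).add t4).add t5).add t6).congr' ?_ EventuallyEq.rfl
  filter_upwards [FL_S] with q hq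
  have he : (q.1 : ℂ) * (ep q.1 : ℂ)^2 = 1 := by exact_mod_cast ep_sq hq.2.1
  have hc' : (m:ℂ) * c^2 = (1+p^2)^2 := by exact_mod_cast hc
  have hA := sqA p
  have key : (q.1:ℂ) * (m * (2 * (ka p c q - ka p c q ^2 / 2) - (ga p c q - ga p c q ^ 2 / 2)))
      + (q.2.1 - q.2.2)^2 = (ep q.1 : ℂ) * FF p c m (ep q.1, q.2) := by
    have h := poly_I p c m (ep q.1) q.2.1 q.2.2 hA
    simp only at h
    unfold ka ga FF
    rw [h, hc', mul_add, ← mul_assoc, ← mul_assoc (q.1:ℂ), he]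
    field_simp
    ring
  unfold EI
  rw [← key]
  ring

lemma IN_eq {S : Set ℕ} {K : Set (ℂ × ℂ)} (hK : IsCompact K) (a b p : ℝ) (hp : 0 < p)
    (ha : 0 ≤ a) (hb : 0 < b) :
    ∀ᶠ q in FL S K, IN q.1 ((b+1)*q.1) (a*q.1) p q.2.1 q.2.2 =
      2 * Complex.exp (EI p ((1+p^2) / Real.sqrt (a+b+1)) (a+b+1) q) := by
  have hm : 0 < a+b+1 := by positivity
  filter_upwards [FL_S, one_add_ne (ka_O (S := S) hK p ((1+p^2) / Real.sqrt (a+b+1))),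
    one_add_ne (al_O (S := S) hK p ((1+p^2) / Real.sqrt (a+b+1))),
    one_add_ne (ga_O (S := S) hK p ((1+p^2) / Real.sqrt (a+b+1))),
    one_add_ne (nu_O (S := S) (K := K) (a+b+1) hm)] with q hq h1 h2 h3 h4
  have hN : (0:ℝ) < q.1 := by exact_mod_cast hq.2.1
  have hA : (0:ℝ) < 1 + p^2 := by positivity
  have z1 := one_zet_eq a b p hp q hq.2.1 ha hb
  have z2 := one_zet_eq a b p hp (q.1, q.2.2, q.2.1) hq.2.1 ha hb
  have y1 := zet_eq a b p hp q hq.2.1 ha hb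
  have y2 := zet_eq a b p hp (q.1, q.2.2, q.2.1) hq.2.1 ha hb
  simp only at z2 y2
  generalize hc : (1+p^2) / Real.sqrt (a+b+1) = c at *
  have hp' : (p:ℂ) ≠ 0 := by exact_mod_cast hp.ne'
  have hA' := sqA p
  have w1 : 1 + zet q.1 ((b+1)*q.1) (a*q.1) p q.2.1 * zet q.1 ((b+1)*q.1) (a*q.1) p q.2.2
      = ((1+p^2 : ℝ) : ℂ) * (1 + ka p c q) := by
    rw [y1, y2]; unfold xx ka
    push_cast
    field_simp
    ring
  have w2 : (1 + zet q.1 ((b+1)*q.1) (a*q.1) p q.2.1 ^ 2) *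
      (1 + zet q.1 ((b+1)*q.1) (a*q.1) p q.2.2 ^ 2) = (((1+p^2)^2 : ℝ) : ℂ) * (1 + ga p c q) := by
    rw [z1, z2]; unfold al ga
    push_cast
    ring
  unfold IN EI
  rw [w1, w2, z1, cpow_real_mul _ hA _ h1, cpow_real_mul _ (by positivity) _ h3,
    ← Complex.ofReal_mul, pre_eq a b p _ hq.2.1 ha hb, Real.log_pow]
  have x1 : Complex.exp (Complex.log (1 + ((1 / (2 * (a+b+1) * q.1) : ℝ) : ℂ)) - Complex.log (1 + al p c q)
  + (2 * (((a+b+1 : ℝ):ℂ) * q.1) - 1) * Complex.log (1 + ka p c q)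
  - (((a+b+1 : ℝ):ℂ) * q.1 - 1/2) * Complex.log (1 + ga p c q)) =
    (1 + ((1 / (2 * (a+b+1) * q.1) : ℝ) : ℂ)) * (1 + al p c q)⁻¹ *
     (Complex.exp (((2*((b+1)*q.1)+2*(a*q.1)-1 : ℝ):ℂ) * (Real.log (1+p^2) + Complex.log (1 + ka p c q))) *
     Complex.exp (((-((b+1)*q.1+a*q.1-1/2) : ℝ):ℂ) * (((2:ℕ) * Real.log (1+p^2) : ℝ) + Complex.log (1 + ga p c q)))) := by
    rw [← Complex.exp_add]
    conv_rhs => rw [← Complex.exp_log h4, ← Complex.exp_log h2, ← Complex.exp_neg, ← Complex.exp_add,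
      ← Complex.exp_add]
    congr 1
    push_cast
    ring
  rw [x1]
  have hN' : (q.1:ℂ) ≠ 0 := by exact_mod_cast hN.ne'
  have hm' : (a:ℂ)+b+1 ≠ 0 := by exact_mod_cast hm.ne'
  have hs : (((1+p^2) / ((a+b+1) * q.1)^2 : ℝ):ℂ) * (((1+p^2 : ℝ):ℂ) * (1 + al p c q))⁻¹ *
     (((2*((b+1)*q.1)+2*(a*q.1)+1)*((b+1)*q.1+a*q.1) : ℝ):ℂ) =
     2 * ((1 + ((1 / (2 * (a+b+1) * q.1) : ℝ) : ℂ)) * (1 + al p c q)⁻¹) := by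
    push_cast
    field_simp
    ring
  linear_combination (Complex.exp (((2*((b+1)*q.1)+2*(a*q.1)-1 : ℝ):ℂ) * (Real.log (1+p^2) + Complex.log (1 + ka p c q))) *
     Complex.exp (((-((b+1)*q.1+a*q.1-1/2) : ℝ):ℂ) * (((2:ℕ) * Real.log (1+p^2) : ℝ) + Complex.log (1 + ga p c q)))) * hs

/-- Lemma 3.4(a): asymptotics of the inhomogeneous prefactors in the
strong non-unitarity regime. -/
theorem prefactor_asymptotics_strong (a b : ℝ) (ha : 0 ≤ a) (hb : 0 < b) (p : ℝ)
    (hp : 0 < p) (K : Set (ℂ × ℂ)) (hK : IsCompact K) :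
    (∃ C : ℝ, ∀ᶠ N : ℕ in atTop ⊓ 𝓟 (Sstrong a b), ∀ q ∈ K,
      ‖IN N ((b+1)*N) (a*N) p q.1 q.2 - 2 * Complex.exp (-(q.1-q.2)^2)‖
        ≤ C / Real.sqrt N) ∧
    ((p = rOut a b → ∃ C : ℝ, ∀ᶠ N : ℕ in atTop ⊓ 𝓟 (Sstrong a b), ∀ q ∈ K,
        ‖IIN N ((b+1)*N) (a*N) p q.1 q.2 -
          (Real.sqrt 2 : ℂ) * Complex.exp (-2*q.1^2)‖ ≤ C / Real.sqrt N) ∧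
      (p ≠ rOut a b → ∃ c : ℝ, 0 < c ∧ ∃ C : ℝ,
        ∀ᶠ N : ℕ in atTop ⊓ 𝓟 (Sstrong a b), ∀ q ∈ K,
          ‖IIN N ((b+1)*N) (a*N) p q.1 q.2‖ ≤ C * Real.exp (-c*N))) ∧
    ((p = rIn a b → ∃ C : ℝ, ∀ᶠ N : ℕ in atTop ⊓ 𝓟 (Sstrong a b), ∀ q ∈ K,
        ‖IIIN N ((b+1)*N) (a*N) p q.1 q.2 -
          (Real.sqrt 2 : ℂ) * Complex.exp (-2*q.1^2)‖ ≤ C / Real.sqrt N) ∧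
      (p ≠ rIn a b → ∃ c : ℝ, 0 < c ∧ ∃ C : ℝ,
        ∀ᶠ N : ℕ in atTop ⊓ 𝓟 (Sstrong a b), ∀ q ∈ K,
          ‖IIIN N ((b+1)*N) (a*N) p q.1 q.2‖ ≤ C * Real.exp (-c*N))) := by
  set c : ℝ := (1+p^2) / Real.sqrt (a+b+1) with hcdef
  have hm : 0 < a+b+1 := by positivity
  have hA : (0:ℝ) < 1 + p^2 := by positivity
  have hc : (a+b+1) * c^2 = (1+p^2)^2 := by
    rw [hcdef, div_pow, Real.sq_sqrt hm.le]; field_simp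
  have hS1 : ∀ N ∈ Sstrong a b, (∃ x : ℕ, (x:ℝ) = (1+a) * N) ∧ (∃ y : ℕ, (y:ℝ) = b * N) := by
    rintro N ⟨h0, ⟨l, hl⟩, ⟨n, hn⟩⟩
    refine ⟨⟨N + l, by push_cast; rw [hl]; ring⟩, ⟨n - N, ?_⟩⟩
    have hle : N ≤ n := by
      have : (N:ℝ) ≤ n := by rw [hn]; nlinarith [(Nat.cast_nonneg N : (0:ℝ) ≤ N)]
      exact_mod_cast this
    rw [Nat.cast_sub hle, hn]; ring
  have hS2 : ∀ N ∈ Sstrong a b, (∃ x : ℕ, (x:ℝ) = (b+1) * N) ∧ (∃ y : ℕ, (y:ℝ) = a * N) := by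
    rintro N ⟨h0, h1, h2⟩
    exact ⟨h2, h1⟩
  have hmII : a+b+1 = (1+a) + b := by ring
  have hmIII : a+b+1 = (b+1) + a := by ring
  have hmIII' : a+b+1 = a + (b+1) := by ring
  refine ⟨?_, ⟨?_, ?_⟩, ⟨?_, ?_⟩⟩
  · refine final_bigO (S := Sstrong a b) (K := K) (fun N q => IN N ((b+1)*N) (a*N) p q.1 q.2
      - 2 * Complex.exp (-(q.1-q.2)^2)) ?_
    have h := exp_asymp _ _ (EI_O (S := Sstrong a b) hK p c (a+b+1) hm hc)
      (bdd (S := Sstrong a b) hK (fun t => Complex.exp (-(t.2.1 - t.2.2)^2)) (by fun_prop))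
    refine (h.const_mul_left 2).congr' ?_ EventuallyEq.rfl
    filter_upwards [IN_eq (S := Sstrong a b) hK a b p hp ha hb] with q hq
    rw [hq]; ring
  · intro hpr
    have hp2 : p^2 = (1+a)/b := by
      rw [hpr]; unfold rOut; rw [Real.sq_sqrt (by positivity)]
    refine final_bigO (S := Sstrong a b) (K := K) (fun N q => IIN N ((b+1)*N) (a*N) p q.1 q.2
      - (Real.sqrt 2 : ℂ) * Complex.exp (-2*q.1^2)) ?_
    have h := GG_crit (S := Sstrong a b) hK p c (a+b+1) (1+a) 0 (1+a) b hp (by positivity) hb hmII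
      hS1 hc (by rw [hp2]; field_simp; ring)
      (by
        have : Real.log (1+p^2) = Real.log (a+b+1) - Real.log b := by
          rw [← Real.log_div hm.ne' hb.ne', hp2]; congr 1; field_simp; ring
        unfold E0; rw [this]; ring)
      (by rw [hmII]; exact hh_zero p (1+a) b hp (by positivity) hb hp2)
    refine h.congr' ?_ EventuallyEq.rfl
    filter_upwards [FL_S] with q hq
    rw [IIN_eq a b p hp q hq.2.1 ha hb]
  · intro hpr
    have hp2 : p^2 ≠ (1+a)/b := by
      intro h; apply hpr; unfold rOut; rw [← h, Real.sqrt_sq hp.le]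
    obtain ⟨d, hd, C, hC⟩ := GG_non (S := Sstrong a b) hK p c (a+b+1) (1+a) 0 (1+a) b hp
      (by positivity) hb hmII hS1 (by rw [hmII]; exact hh_neg p (1+a) b hp (by positivity) hb hp2)
    refine ⟨d, hd, C, ev_FL (P := fun N q => ‖IIN N ((b+1)*N) (a*N) p q.1 q.2‖
      ≤ C * Real.exp (-d*N)) ?_⟩
    filter_upwards [hC, FL_S] with q h1 hq
    rw [IIN_eq a b p hp q hq.2.1 ha hb]
    exact h1
  · intro hpr
    have ha' : 0 < a := by
      rcases ha.lt_or_eq with h | h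
      · exact h
      · exfalso; rw [hpr, rIn, ← h] at hp; simp at hp
    have hp2 : p^2 = a/(b+1) := by
      rw [hpr]; unfold rIn; rw [Real.sq_sqrt (by positivity)]
    refine final_bigO (S := Sstrong a b) (K := K) (fun N q => IIIN N ((b+1)*N) (a*N) p q.1 q.2
      - (Real.sqrt 2 : ℂ) * Complex.exp (-2*q.1^2)) ?_
    have h := GG_crit (S := Sstrong a b) hK p c (a+b+1) a 1 (b+1) a hp (by positivity) ha' hmIII
      hS2 hc (by rw [hp2]; field_simp; ring)
      (by
        have e1 : Real.log (1+p^2) = Real.log (a+b+1) - Real.log (b+1) := by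
          rw [← Real.log_div hm.ne' (by positivity), hp2]; congr 1; field_simp; ring
        have e2 : 2 * Real.log p = Real.log a - Real.log (b+1) := by
          rw [← Real.log_div ha'.ne' (by positivity), ← hp2, Real.log_pow]; norm_num
        unfold E0; rw [e1]; linear_combination (-1/2) * e2)
      (by rw [hh_symm, hmIII']; exact hh_zero p a (b+1) hp ha' (by positivity) hp2)
    refine h.congr' ?_ EventuallyEq.rfl
    filter_upwards [FL_S] with q hq
    rw [IIIN_eq a b p hp q hq.2.1 ha hb]
  · intro hpr
    rcases ha.lt_or_eq with ha' | ha'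
    · have hp2 : p^2 ≠ a/(b+1) := by
        intro h; apply hpr; unfold rIn; rw [← h, Real.sqrt_sq hp.le]
      obtain ⟨d, hd, C, hC⟩ := GG_non (S := Sstrong a b) hK p c (a+b+1) a 1 (b+1) a hp
        (by positivity) ha' hmIII hS2
        (by rw [hh_symm, hmIII']; exact hh_neg p a (b+1) hp ha' (by positivity) hp2)
      refine ⟨d, hd, C, ev_FL (P := fun N q => ‖IIIN N ((b+1)*N) (a*N) p q.1 q.2‖
        ≤ C * Real.exp (-d*N)) ?_⟩
      filter_upwards [hC, FL_S] with q h1 hq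
      rw [IIIN_eq a b p hp q hq.2.1 ha hb]
      exact h1
    · refine ⟨1, one_pos, 0, Eventually.of_forall (fun N q _ => ?_)⟩
      unfold IIIN
      rw [← ha']
      simp [Complex.Gamma_zero]

end SI
end
end

section
/- Incomplete-gamma limits of the binomial-type sums at the singular origin (Lemma 3.5(c)). Under the singular-origin setup with 2L a positive integer, for z, w ∈ ℂ set ζ := z/√(Nδ), η := w/√(Nδ) with δ := (n+L)/N. Then, uniformly for (z,w) in compact subsets of ℂ × ℂ as N → ∞: (i) ∑_{k=0}^{2N−1} (Γ(2n+2L)/(Γ(k+2L+1)Γ(2n−k)))·(ζη)^{k+2L}·(1+ζη)^{−(2n+2L−1)} converges to P(2L,2zw) := ((2zw)^{2L}/Γ(2L))∫_0^1 s^{2L−1}e^{−2zws}ds; (ii) ∑_{k=0}^{N−1} (Γ(n+L+1/2)/(Γ(k+L+1)Γ(n−k+1/2)))·η^{2k+2L}·(1+η²)^{−(n+L−1/2)} converges to P(L,w²) := (w^{2L}/Γ(L))∫_0^1 s^{L−1}e^{−w²s}ds; and (iii) ∑_{k=0}^{N−1} (Γ(n+L+1/2)/(Γ(k+L+3/2)Γ(n−k)))·η^{2k+2L+1}·(1+η²)^{−(n+L−1/2)}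 converges to P(L+1/2,w²) := (w^{2L+1}/Γ(L+1/2))∫_0^1 s^{L−1/2}e^{−w²s}ds. In (ii) and (iii) the power (1+η²)^{−(n+L−1/2)} is the principal branch. -/
open MeasureTheory Filter Finset

noncomputable section

namespace SI

/-- The regularised incomplete gamma function
`P(2L, x) = (x^{2L}/Γ(2L)) ∫₀¹ s^{2L-1} e^{-xs} ds` with `M = 2L ∈ ℕ`. -/
def P2L (M : ℕ) (x : ℂ) : ℂ :=
  (x ^ M / Complex.Gamma ((M : ℝ) : ℂ)) *
    ∫ s in (0:ℝ)..1, (s:ℂ) ^ (M-1) * Complex.exp (-x*(s:ℂ))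

/-- `P(L+1/2, w²) = (w^{2L+1}/Γ(L+1/2)) ∫₀¹ s^{L-1/2} e^{-w²s} ds` with `M = 2L`. -/
def PLhalf (M : ℕ) (L : ℝ) (w : ℂ) : ℂ :=
  (w ^ (M+1) / Complex.Gamma ((L+1/2 : ℝ) : ℂ)) *
    ∫ s in (0:ℝ)..1, ((s ^ (L-1/2) : ℝ) : ℂ) * Complex.exp (-w^2*(s:ℂ))

/-- The admissible system sizes in the singular-origin regime:
positive `N` for which `n = (b+1)N` is an integer. -/
def Ssing (b : ℝ) : Set ℕ :=
  {N | 0 < N ∧ ∃ nm : ℕ, (nm : ℝ) = (b+1)*N}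

/-- `P(L, w²) = (w^{2L}/Γ(L)) ∫₀¹ s^{L-1} e^{-w²s} ds` with `M = 2L`. -/
def PLfun (M : ℕ) (w : ℂ) : ℂ :=
  (w ^ M / Complex.Gamma (((M:ℝ)/2 : ℝ) : ℂ)) *
    ∫ s in (0:ℝ)..1, ((s ^ ((M:ℝ)/2-1) : ℝ) : ℂ) * Complex.exp (-w^2*(s:ℂ))

/-- The rescaled point `ζ = z/√(Nδ)` at the origin. -/
def zet0 (N : ℕ) (n L : ℝ) (z : ℂ) : ℂ := z / (sc N n L 0 : ℂ)

open Topology in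
theorem unif_aux {X : Type*} [TopologicalSpace X] (p : Filter ℕ) (K : Set X) (hK : IsCompact K)
    (F : ℕ → X → ℂ) (f : X → ℂ)
    (h : ∀ q ∈ K, Tendsto (fun r : ℕ × X => F r.1 r.2) (p ×ˢ 𝓝[K] q) (𝓝 (f q))) :
    TendstoUniformlyOn F f p K := by
  rcases p.eq_or_neBot with rfl | hp
  · intro u hu; simp
  rw [← tendstoLocallyUniformlyOn_iff_tendstoUniformlyOn_of_compact hK,
    Metric.tendstoLocallyUniformlyOn_iff]
  intro ε hε q hq
  have h1 := (Metric.tendsto_nhds.1 (h q hq)) (ε/3) (by positivity)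
  obtain ⟨pa, hpa, pb, hpb, hab⟩ := eventually_prod_iff.1 h1
  refine ⟨{y | pb y} ∩ K, inter_mem hpb self_mem_nhdsWithin, ?_⟩
  filter_upwards [hpa] with n hn y hy
  have h2 : Tendsto (fun n => F n y) p (𝓝 (f y)) := by
    have : Tendsto (fun n : ℕ => (n, y)) p (p ×ˢ 𝓝[K] y) := by
      refine tendsto_id.prodMk ?_
      exact tendsto_const_pure.mono_right (pure_le_nhdsWithin hy.2)
    exact (h y hy.2).comp this
  have h3 : dist (f y) (f q) ≤ ε/3 := by
    refine le_of_tendsto (h2.dist tendsto_const_nhds) ?_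
    filter_upwards [hpa] with m hm
    exact (hab hm hy.1).le
  have h4 := hab hn hy.1
  simp only at h4
  calc dist (f y) (F n y) ≤ dist (f y) (f q) + dist (F n y) (f q) := dist_triangle_right _ _ _
    _ < ε := by linarith

theorem gamma_ratio_le {A s : ℝ} (hs : 0 < s) (hA : s < A) :
    Real.Gamma A ≤ Real.Gamma (A - s) * A ^ s := by
  have hA0 : 0 < A := hs.trans hA
  have hc := Real.convexOn_log_Gamma
  have := hc.slope_mono_adjacent (x := A - s) (y := A) (z := A + 1)
    (by simp [hA]) (by simp; linarith) (by linarith) (by linarith)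
  have g1 := Real.Gamma_pos_of_pos hA0
  have g2 := Real.Gamma_pos_of_pos (sub_pos.2 hA)
  simp only [Function.comp] at this
  rw [Real.Gamma_add_one hA0.ne', Real.log_mul hA0.ne' g1.ne'] at this
  rw [← Real.log_le_log_iff g1 (by positivity), Real.log_mul g2.ne' (by positivity),
    Real.log_rpow hA0]
  rw [show A - (A - s) = s by ring, show A + 1 - A = 1 by ring, div_le_iff₀ hs] at this
  linarith

theorem le_gamma_ratio {A s : ℝ} (hs : 0 < s) (hA : s + 1 < A) :
    Real.Gamma (A - s) * (A - s - 1) ^ s ≤ Real.Gamma A := by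
  have hA0 : 0 < A := by linarith
  have hB : 0 < A - s - 1 := by linarith
  have hc := Real.convexOn_log_Gamma
  have := hc.slope_mono_adjacent (x := A - s - 1) (y := A - s) (z := A)
    (by simp; linarith) (by simp; linarith) (by linarith) (by linarith)
  have g1 := Real.Gamma_pos_of_pos hA0
  have g2 := Real.Gamma_pos_of_pos (show 0 < A - s by linarith)
  have g3 := Real.Gamma_pos_of_pos hB
  simp only [Function.comp] at this
  have e : Real.log (Real.Gamma (A - s)) =
      Real.log (A - s - 1) + Real.log (Real.Gamma (A - s - 1)) := by
    rw [← Real.log_mul hB.ne' g3.ne', ← Real.Gamma_add_one hB.ne']; ring_nf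
  rw [← Real.log_le_log_iff (by positivity) g1, Real.log_mul g2.ne' (by positivity),
    Real.log_rpow hB]
  rw [show A - (A - s) = s by ring, show A - s - (A - s - 1) = 1 by ring, le_div_iff₀ hs] at this
  rw [e] at this ⊢
  linarith

open Topology in
theorem gamma_ratio_tendsto {ι : Type*} {F : Filter ι} {A T : ι → ℝ} (hA : Tendsto A F atTop)
    (hAT : Tendsto (fun i => A i / T i) F (𝓝 1)) (hT : ∀ᶠ i in F, 0 < T i) {s : ℝ} (hs : 0 < s) :
    Tendsto (fun i => Real.Gamma (A i) / (Real.Gamma (A i - s) * T i ^ s)) F (𝓝 1) := by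
  have hTi : Tendsto (fun i => (T i)⁻¹) F (𝓝 0) := by
    have := hAT.mul (tendsto_inv_atTop_zero.comp hA)
    simp only [mul_zero] at this
    refine this.congr' ?_
    filter_upwards [hA.eventually_gt_atTop 0, hT] with i h1 h2
    simp; field_simp
  have up : Tendsto (fun i => (A i / T i) ^ s) F (𝓝 1) := by
    simpa using hAT.rpow_const (p := s) (Or.inr hs.le)
  have lo : Tendsto (fun i => (A i / T i - (s+1) * (T i)⁻¹) ^ s) F (𝓝 1) := by
    have : Tendsto (fun i => (A i / T i - (s+1) * (T i)⁻¹)) F (𝓝 1) := by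
      simpa using hAT.sub (hTi.const_mul (s+1))
    simpa using this.rpow_const (p := s) (Or.inr hs.le)
  refine tendsto_of_tendsto_of_tendsto_of_le_of_le' lo up ?_ ?_
  · filter_upwards [hA.eventually_gt_atTop (s+1), hT] with i h1 h2
    have g2 := Real.Gamma_pos_of_pos (show 0 < A i - s by linarith)
    rw [show A i / T i - (s+1) * (T i)⁻¹ = (A i - s - 1) / T i by field_simp; ring,
      Real.div_rpow (by linarith) h2.le, div_le_div_iff₀ (by positivity) (by positivity)]
    have := le_gamma_ratio hs h1
    have h3 : 0 < T i ^ s := by positivity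
    nlinarith
  · filter_upwards [hA.eventually_gt_atTop s, hT] with i h1 h2
    have g2 := Real.Gamma_pos_of_pos (show 0 < A i - s by linarith)
    rw [Real.div_rpow (by linarith) h2.le, div_le_div_iff₀ (by positivity) (by positivity)]
    have := gamma_ratio_le hs h1
    have h3 : 0 < T i ^ s := by positivity
    nlinarith

theorem fact_le_gamma {a : ℝ} (ha : 0 < a) (k : ℕ) :
    (k.factorial : ℝ) * Real.Gamma (a + 1) ≤ Real.Gamma (k + a + 1) := by
  induction k with
  | zero => simp
  | succ k ih =>
    have : ((k+1 : ℕ) : ℝ) + a + 1 = (k + a + 1) + 1 := by push_cast; ring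
    have hp : (0:ℝ) < k + a + 1 := by positivity
    rw [this, Real.Gamma_add_one hp.ne', Nat.factorial_succ]
    push_cast
    have g := Real.Gamma_pos_of_pos (show 0 < a + 1 by linarith)
    have : (k:ℝ) + 1 ≤ k + a + 1 := by linarith
    calc ((k:ℝ)+1) * k.factorial * Real.Gamma (a+1)
        = (k+1) * (k.factorial * Real.Gamma (a+1)) := by ring
      _ ≤ _ := by gcongr

theorem summable_aux {a : ℝ} (ha : 0 < a) (R : ℝ) (hR : 0 ≤ R) :
    Summable (fun k : ℕ => R ^ k / Real.Gamma (k + a + 1)) := by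
  have g := Real.Gamma_pos_of_pos (show 0 < a + 1 by linarith)
  refine Summable.of_nonneg_of_le (fun k => ?_) (fun k => ?_)
    ((Real.summable_pow_div_factorial R).mul_right (Real.Gamma (a+1))⁻¹)
  · have := Real.Gamma_pos_of_pos (show (0:ℝ) < k + a + 1 by positivity)
    positivity
  · rw [div_mul_eq_mul_div, ← div_eq_mul_inv, div_div, mul_comm (Real.Gamma _)]
    gcongr
    exact fact_le_gamma ha k

open Topology in
theorem exp_aux {ι : Type*} {F : Filter ι} {u : ι → ℂ} {B : ι → ℝ} {x : ℂ}
    (hu : Tendsto u F (𝓝 0)) (h : Tendsto (fun i => (B i : ℂ) * u i) F (𝓝 x)) :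
    Tendsto (fun i => (1 + u i) ^ ((-(B i) : ℝ) : ℂ)) F (𝓝 (Complex.exp (-x))) := by
  have hd : (fun v : ℂ => Complex.log (1 + v) - v) =o[𝓝 0] (fun v => v) := by
    have := (Complex.hasDerivAt_log (z := 1) (by simp)).isLittleO
    have := this.comp_tendsto (k := fun v : ℂ => 1 + v) (l' := 𝓝 0)
      (by simpa using (continuous_const_add (1:ℂ)).tendsto 0)
    simpa [Function.comp_def] using this
  have h1 := hd.comp_tendsto hu
  have h2 : (fun i => (B i : ℂ) * (Complex.log (1 + u i) - u i)) =o[F] (fun i => (B i : ℂ) * u i) :=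
    (Asymptotics.isBigO_refl _ _).mul_isLittleO h1
  have h3 := (h2.trans_isBigO (h.isBigO_one ℂ))
  rw [Asymptotics.isLittleO_one_iff] at h3
  have h4 : Tendsto (fun i => (B i : ℂ) * Complex.log (1 + u i)) F (𝓝 x) := by
    have := h3.add h
    simp only [zero_add] at this
    refine this.congr fun i => by ring
  have h5 := (Complex.continuous_exp.tendsto _).comp h4.neg
  refine h5.congr' ?_
  filter_upwards [hu.eventually_ne (show (0:ℂ) ≠ -1 by simp)] with i hi
  have : 1 + u i ≠ 0 := fun h => hi (by linear_combination h)
  rw [Complex.cpow_def_of_ne_zero this]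
  simp only [Function.comp]
  congr 1
  push_cast; ring

theorem beta_aux {a : ℝ} (ha : 0 < a) (k : ℕ) :
    ∫ s in (0:ℝ)..1, ((s ^ (a-1) : ℝ) : ℂ) * ((1 - s : ℝ) : ℂ) ^ k =
      ((Real.Gamma a * k.factorial / Real.Gamma (k + a + 1) : ℝ) : ℂ) := by
  have h := Complex.Gamma_mul_Gamma_eq_betaIntegral (s := (a:ℂ)) (t := (k:ℂ)+1)
    (by simpa using ha) (by simp; positivity)
  have e : Complex.betaIntegral (a:ℂ) ((k:ℂ)+1) =
      ∫ s in (0:ℝ)..1, ((s ^ (a-1) : ℝ) : ℂ) * ((1 - s : ℝ) : ℂ) ^ k := by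
    unfold Complex.betaIntegral
    refine intervalIntegral.integral_congr fun s hs => ?_
    rw [Set.uIcc_of_le zero_le_one] at hs
    rw [Complex.ofReal_cpow hs.1]
    simp [Complex.cpow_natCast]
  rw [← e]
  have g := Real.Gamma_pos_of_pos (show (0:ℝ) < k + a + 1 by positivity)
  rw [Complex.Gamma_nat_eq_factorial, Complex.Gamma_ofReal,
    show (a:ℂ) + (k + 1) = ((k + a + 1 : ℝ) : ℂ) by push_cast; ring, Complex.Gamma_ofReal] at h
  have : ((Real.Gamma (k+a+1) : ℝ) : ℂ) ≠ 0 := by exact_mod_cast g.ne'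
  push_cast
  rw [eq_div_iff (by exact_mod_cast this), ]
  rw [h]; push_cast; ring

theorem series_aux {a : ℝ} (ha : 0 < a) (x : ℂ) :
    (∑' k : ℕ, x ^ k / (Real.Gamma (k + a + 1) : ℂ)) * Complex.exp (-x) =
    (1 / (Real.Gamma a : ℂ)) *
      ∫ s in (0:ℝ)..1, ((s ^ (a-1) : ℝ) : ℂ) * Complex.exp (-x * s) := by
  have hint : IntervalIntegrable (fun s : ℝ => s ^ (a-1)) volume 0 1 :=
    intervalIntegral.intervalIntegrable_rpow' (by linarith)
  have H := intervalIntegral.hasSum_integral_of_dominated_convergence (ι := ℕ) (a := 0) (b := 1)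
    (μ := volume)
    (F := fun k s => ((s ^ (a-1) : ℝ) : ℂ) * ((1 - s : ℝ) : ℂ) ^ k * (x ^ k / k.factorial))
    (f := fun s => ((s ^ (a-1) : ℝ) : ℂ) * Complex.exp (x * (1 - s)))
    (fun k s => s ^ (a-1) * (‖x‖ ^ k / k.factorial)) ?_ ?_ ?_ ?_ ?_
  · have g := Real.Gamma_pos_of_pos ha
    have gc : (Real.Gamma a : ℂ) ≠ 0 := by exact_mod_cast g.ne'
    have H2 := H.mul_left (1 / (Real.Gamma a : ℂ) * Complex.exp (-x))
    have e : ∀ k : ℕ, (1 / (Real.Gamma a : ℂ) * Complex.exp (-x)) *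
        (∫ s in (0:ℝ)..1, ((s ^ (a-1) : ℝ) : ℂ) * ((1 - s : ℝ) : ℂ) ^ k * (x ^ k / k.factorial))
        = x ^ k / (Real.Gamma (k + a + 1) : ℂ) * Complex.exp (-x) := by
      intro k
      rw [intervalIntegral.integral_mul_const, beta_aux ha]
      have : (k.factorial : ℂ) ≠ 0 := by exact_mod_cast k.factorial_ne_zero
      push_cast
      field_simp
    simp only [e] at H2
    rw [← tsum_mul_right, H2.tsum_eq, mul_assoc, ← intervalIntegral.integral_const_mul]
    congr 1
    refine intervalIntegral.integral_congr fun s _ => ?_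
    rw [mul_left_comm, ← Complex.exp_add]
    ring_nf
  · intro k
    refine Measurable.aestronglyMeasurable ?_
    fun_prop
  · intro k
    refine Eventually.of_forall fun s hs => ?_
    rw [Set.uIoc_of_le zero_le_one] at hs
    rw [norm_mul, norm_mul, norm_div, norm_pow, norm_pow, Complex.norm_real, Complex.norm_real,
      Real.norm_of_nonneg (Real.rpow_nonneg hs.1.le _), Real.norm_of_nonneg (by linarith [hs.2]),
      Complex.norm_natCast]
    have h1 : (1 - s) ^ k ≤ 1 := pow_le_one₀ (by linarith [hs.2]) (by linarith [hs.1])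
    have h2 := Real.rpow_nonneg hs.1.le (a-1)
    gcongr
    exact mul_le_of_le_one_right h2 h1
  · refine Eventually.of_forall fun s hs => ?_
    exact (Real.summable_pow_div_factorial ‖x‖).mul_left _
  · simp only [tsum_mul_left]
    exact hint.mul_const _
  · refine Eventually.of_forall fun s hs => ?_
    have := (NormedSpace.expSeries_div_hasSum_exp (x * (1 - s : ℂ))).mul_left
      (((s ^ (a-1) : ℝ) : ℂ))
    rw [← Complex.exp_eq_exp_ℂ] at this
    have e : (fun k : ℕ => ((s ^ (a-1) : ℝ) : ℂ) * ((1 - s : ℝ) : ℂ) ^ k * (x ^ k / k.factorial))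
        = fun k : ℕ => ((s ^ (a-1) : ℝ) : ℂ) * ((x * (1 - s : ℂ)) ^ k / k.factorial) := by
      funext k
      push_cast
      rw [mul_pow]; ring
    rw [e]
    exact this

open Topology in
theorem core {ι : Type*} (F : Filter ι) {a : ℝ} (ha : 0 < a) (A T : ι → ℝ) (m : ι → ℕ)
    (X : ι → ℂ) (x : ℂ) (hA : Tendsto A F atTop)
    (hAT : Tendsto (fun i => A i / T i) F (𝓝 1)) (hT : ∀ᶠ i in F, 0 < T i)
    (hm : Tendsto m F atTop) (hpos : ∀ᶠ i in F, ∀ k < m i, 0 < A i - a - k)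
    (hX : Tendsto X F (𝓝 x)) :
    Tendsto (fun i => (∑ k ∈ range (m i),
        ((Real.Gamma (A i) / (Real.Gamma (k + a + 1) * Real.Gamma (A i - a - k)) /
          T i ^ (a + k) : ℝ) : ℂ) * X i ^ k) * (1 + X i / T i) ^ ((-(A i - 1) : ℝ) : ℂ)) F
      (𝓝 ((1 / (Real.Gamma a : ℂ)) *
      ∫ s in (0:ℝ)..1, ((s ^ (a-1) : ℝ) : ℂ) * Complex.exp (-x * s))) := by
  rw [← series_aux ha]
  have hTi : Tendsto (fun i => (T i)⁻¹) F (𝓝 0) := by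
    have := hAT.mul (tendsto_inv_atTop_zero.comp hA)
    simp only [mul_zero] at this
    refine this.congr' ?_
    filter_upwards [hA.eventually_gt_atTop 0, hT] with i h1 h2
    simp; field_simp
  have hTi' : Tendsto (fun i => ((T i : ℂ))⁻¹) F (𝓝 0) := by
    have := (Complex.continuous_ofReal.tendsto 0).comp hTi
    simpa [Function.comp_def] using this
  refine Tendsto.mul ?_ ?_
  · set f : ι → ℕ → ℂ := fun i k => if k < m i then
        ((Real.Gamma (A i) / (Real.Gamma (k + a + 1) * Real.Gamma (A i - a - k)) /
          T i ^ (a + k) : ℝ) : ℂ) * X i ^ k else 0 with hf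
    have hfe : ∀ i, ∑ k ∈ range (m i),
        ((Real.Gamma (A i) / (Real.Gamma (k + a + 1) * Real.Gamma (A i - a - k)) /
          T i ^ (a + k) : ℝ) : ℂ) * X i ^ k = ∑' k, f i k := by
      intro i
      rw [tsum_eq_sum (s := range (m i))]
      · refine Finset.sum_congr rfl fun k hk => ?_
        simp only [hf]; rw [if_pos (Finset.mem_range.1 hk)]
      · intro k hk
        simp only [hf]; rw [if_neg (by simpa using hk)]
    simp only [hfe]
    set R : ℝ := ‖x‖ + 1
    have hR : 0 ≤ R := by positivity
    refine tendsto_tsum_of_dominated_convergence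
      (bound := fun k => 2 ^ a * ((2 * R) ^ k / Real.Gamma (k + a + 1)))
      ((summable_aux ha (2*R) (by positivity)).mul_left _) ?_ ?_
    · intro k
      have h1 := gamma_ratio_tendsto hA hAT hT (s := a + k) (by positivity)
      have h2 := ((Complex.continuous_ofReal.tendsto 1).comp h1).mul (hX.pow k)
      have h3 := h2.div_const (Real.Gamma (k + a + 1) : ℂ)
      simp only [Complex.ofReal_one, one_mul] at h3
      refine h3.congr' ?_
      filter_upwards [hm.eventually_gt_atTop k] with i hi
      simp only [hf, Function.comp]
      rw [if_pos hi, sub_sub]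
      push_cast
      simp only [div_eq_mul_inv, mul_inv]
      ring
    · have hX2 : ∀ᶠ i in F, ‖X i‖ < R := hX.norm.eventually_lt_const (by simp [R])
      have hA2 : ∀ᶠ i in F, A i / T i < 2 := hAT.eventually_lt_const (by norm_num)
      filter_upwards [hX2, hA2, hpos, hT, hA.eventually_gt_atTop 0] with i h1 h2 h3 h4 h5 k
      have g := Real.Gamma_pos_of_pos (show (0:ℝ) < k + a + 1 by positivity)
      by_cases hk : k < m i
      · simp only [hf]
        rw [if_pos hk, norm_mul, norm_pow, Complex.norm_real]
        have h6 := h3 k hk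
        have g2 := Real.Gamma_pos_of_pos h6
        have g3 := Real.Gamma_pos_of_pos h5
        have h7 := gamma_ratio_le (A := A i) (s := a + k) (by positivity) (by linarith)
        rw [← sub_sub] at h7
        have h8 : 0 < T i ^ (a + k) := by positivity
        rw [Real.norm_of_nonneg (by positivity)]
        have h9 : Real.Gamma (A i) / (Real.Gamma (k + a + 1) * Real.Gamma (A i - a - k)) /
          T i ^ (a + k) ≤ 2 ^ a * 2 ^ k / Real.Gamma (k + a + 1) := by
          have h10 : (A i / T i) ^ (a + k) ≤ (2:ℝ) ^ (a + k) :=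
            Real.rpow_le_rpow (by positivity) h2.le (by positivity)
          rw [Real.div_rpow h5.le h4.le, Real.rpow_add_natCast (by norm_num : (2:ℝ) ≠ 0)] at h10
          calc _ ≤ (Real.Gamma (A i - a - k) * A i ^ (a + k)) /
                (Real.Gamma (k + a + 1) * Real.Gamma (A i - a - k)) / T i ^ (a + k) := by gcongr
            _ = (A i ^ (a + k) / T i ^ (a + k)) / Real.Gamma (k + a + 1) := by field_simp
            _ ≤ _ := by gcongr
        calc _ ≤ 2 ^ a * 2 ^ k / Real.Gamma (k + a + 1) * R ^ k := by gcongr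
          _ = _ := by rw [mul_pow]; ring
      · simp only [hf]
        rw [if_neg hk, norm_zero]; positivity
  · refine exp_aux (B := fun i => A i - 1) ?_ ?_
    · simpa [div_eq_mul_inv] using hX.mul hTi'
    · have h1 : Tendsto (fun i => (A i - 1) / T i) F (𝓝 1) := by
        have := hAT.sub hTi
        rw [sub_zero] at this
        refine this.congr fun i => by rw [sub_div, one_div]
      have h2 := ((Complex.continuous_ofReal.tendsto 1).comp h1).mul hX
      simp only [Complex.ofReal_one, one_mul] at h2
      refine h2.congr fun i => ?_
      simp only [Function.comp]
      push_cast; ring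

theorem sc_aux (b : ℝ) (M N : ℕ) (hN : 0 < N) :
    sc N ((b+1)*N) ((M:ℝ)/2) 0 = Real.sqrt ((b+1)*N + (M:ℝ)/2) := by
  have : (N:ℝ) ≠ 0 := by positivity
  unfold sc dlt
  congr 1
  simp
  field_simp

theorem zet_pow_aux (b : ℝ) (hb : 0 < b) (M N k e : ℕ) (hN : 0 < N) (w : ℂ) :
    zet0 N ((b+1)*N) ((M:ℝ)/2) w ^ (2*k+e) =
      w ^ e * (w^2) ^ k / ((((b+1)*N + (M:ℝ)/2) ^ ((e:ℝ)/2 + k) : ℝ) : ℂ) := by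
  have hT : 0 ≤ (b+1)*N + (M:ℝ)/2 := by positivity
  unfold zet0
  rw [sc_aux b M N hN, div_pow, ← Complex.ofReal_pow]
  congr 1
  · ring
  · rw [Real.sqrt_eq_rpow, ← Real.rpow_mul_natCast hT]
    congr 2
    push_cast; ring

theorem zet_mul_aux (b : ℝ) (hb : 0 < b) (M N : ℕ) (hN : 0 < N) (z w : ℂ) :
    zet0 N ((b+1)*N) ((M:ℝ)/2) z * zet0 N ((b+1)*N) ((M:ℝ)/2) w =
      (2*z*w) / ((2*((b+1)*N) + (M:ℝ) : ℝ) : ℂ) := by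
  have hT : 0 < (b+1)*N + (M:ℝ)/2 := by positivity
  unfold zet0
  rw [sc_aux b M N hN, div_mul_div_comm, ← Complex.ofReal_mul, Real.mul_self_sqrt hT.le]
  have h1 : (((b+1)*N + (M:ℝ)/2 : ℝ) : ℂ) ≠ 0 := by exact_mod_cast hT.ne'
  have h2 : ((2*((b+1)*N) + (M:ℝ) : ℝ) : ℂ) = 2 * (((b+1)*N + (M:ℝ)/2 : ℝ) : ℂ) := by
    push_cast; ring
  rw [h2]
  field_simp

theorem zet_sq_aux (b : ℝ) (hb : 0 < b) (M N : ℕ) (hN : 0 < N) (w : ℂ) :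
    zet0 N ((b+1)*N) ((M:ℝ)/2) w ^ 2 = w ^ 2 / (((b+1)*N + (M:ℝ)/2 : ℝ) : ℂ) := by
  have := zet_pow_aux b hb M N 1 0 hN w
  simpa using this

open Topology in
theorem half_case (b : ℝ) (hb : 0 < b) (M e : ℕ) (he : 1 ≤ e) (heM : e ≤ M + 1)
    {X : Type*} (G : Filter (ℕ × X)) (hG : Tendsto (fun r : ℕ × X => r.1) G atTop)
    (W : X → ℂ) (w : ℂ) (hW : Tendsto (fun r : ℕ × X => W r.2) G (𝓝 w)) :
    Tendsto (fun r : ℕ × X => ∑ k ∈ range r.1,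
          Complex.Gamma ((((b+1)*r.1)+(M:ℝ)/2+1/2 : ℝ) : ℂ) /
            (Complex.Gamma ((k+(e:ℝ)/2+1 : ℝ) : ℂ) *
              Complex.Gamma ((((b+1)*r.1)+(M:ℝ)/2+1/2-(e:ℝ)/2-k : ℝ) : ℂ)) *
          zet0 r.1 ((b+1)*r.1) ((M:ℝ)/2) (W r.2) ^ (2*k+e) *
          (1 + zet0 r.1 ((b+1)*r.1) ((M:ℝ)/2) (W r.2) ^ 2)
            ^ ((-(((b+1)*r.1)+(M:ℝ)/2-1/2) : ℝ) : ℂ)) G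
      (𝓝 ((w ^ e / Complex.Gamma (((e:ℝ)/2 : ℝ) : ℂ)) *
    ∫ s in (0:ℝ)..1, ((s ^ ((e:ℝ)/2-1) : ℝ) : ℂ) * Complex.exp (-w^2*(s:ℂ)))) := by
  have heR : (1:ℝ) ≤ e := by exact_mod_cast he
  have heMR : (e:ℝ) ≤ M + 1 := by exact_mod_cast heM
  have hNR : Tendsto (fun r : ℕ × X => (r.1 : ℝ)) G atTop := tendsto_natCast_atTop_atTop.comp hG
  have hTT : Tendsto (fun r : ℕ × X => (b+1)*r.1 + (M:ℝ)/2) G atTop :=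
    tendsto_atTop_add_const_right _ _ (hNR.const_mul_atTop (by linarith))
  have hc := core G (a := (e:ℝ)/2) (by positivity) (fun r => (b+1)*r.1 + (M:ℝ)/2 + 1/2)
    (fun r => (b+1)*r.1 + (M:ℝ)/2) (fun r => r.1) (fun r => (W r.2)^2) (w^2)
    (tendsto_atTop_add_const_right _ _ hTT) ?_ (hTT.eventually_gt_atTop 0) hG ?_ (hW.pow 2)
  · have hc2 := (hW.pow e).mul hc
    have e1 : (w ^ e / Complex.Gamma (((e:ℝ)/2 : ℝ) : ℂ)) *
      (∫ s in (0:ℝ)..1, ((s ^ ((e:ℝ)/2-1) : ℝ) : ℂ) * Complex.exp (-w^2*(s:ℂ))) =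
      w ^ e * ((1 / (Real.Gamma ((e:ℝ)/2) : ℂ)) *
      ∫ s in (0:ℝ)..1, ((s ^ ((e:ℝ)/2-1) : ℝ) : ℂ) * Complex.exp (-w^2 * s)) := by
      rw [Complex.Gamma_ofReal]; ring
    rw [e1]
    refine hc2.congr' ?_
    filter_upwards [hG.eventually_gt_atTop 0] with r hr
    rw [← mul_assoc, Finset.mul_sum, Finset.sum_mul]
    refine Finset.sum_congr rfl fun k _ => ?_
    rw [zet_pow_aux b hb M r.1 k e hr, zet_sq_aux b hb M r.1 hr, Complex.Gamma_ofReal,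
      Complex.Gamma_ofReal, Complex.Gamma_ofReal,
      show (b+1)*(r.1:ℝ) + (M:ℝ)/2 + 1/2 - 1 = (b+1)*r.1 + (M:ℝ)/2 - 1/2 by ring]
    rw [Complex.ofReal_div, Complex.ofReal_div, Complex.ofReal_mul]
    ring
  · have : Tendsto (fun r : ℕ × X => 1 + (1/2) * ((b+1)*r.1 + (M:ℝ)/2)⁻¹) G (𝓝 1) := by
      simpa using ((tendsto_inv_atTop_zero.comp hTT).const_mul (1/2:ℝ)).const_add (1:ℝ)
    refine this.congr' ?_
    filter_upwards [hTT.eventually_gt_atTop 0] with r hr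
    have hr' := hr.ne'
    generalize (b+1)*(r.1:ℝ) + (M:ℝ)/2 = y at hr'
    field_simp
  · refine Eventually.of_forall fun r k hk => ?_
    have : (k:ℝ) + 1 ≤ r.1 := by exact_mod_cast hk
    have : 0 ≤ b * r.1 := by positivity
    nlinarith

/-- Lemma 3.5(c): incomplete-gamma limits of the binomial-type sums at
the singular origin, with `L = M/2`, `2L = M` a positive integer. -/
theorem binomial_sum_limits_origin (b : ℝ) (hb : 0 < b) (M : ℕ) (hM1 : 1 ≤ M)
    (K : Set (ℂ × ℂ)) (hK : IsCompact K) :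
    TendstoUniformlyOn
      (fun (N : ℕ) (q : ℂ × ℂ) =>
        ∑ k ∈ range (2*N),
          Complex.Gamma ((2*((b+1)*N)+(M:ℝ) : ℝ) : ℂ) /
            (Complex.Gamma ((k+(M:ℝ)+1 : ℝ) : ℂ) *
              Complex.Gamma ((2*((b+1)*N)-k : ℝ) : ℂ)) *
          (zet0 N ((b+1)*N) ((M:ℝ)/2) q.1 * zet0 N ((b+1)*N) ((M:ℝ)/2) q.2) ^ (k+M) *
          (1 + zet0 N ((b+1)*N) ((M:ℝ)/2) q.1 * zet0 N ((b+1)*N) ((M:ℝ)/2) q.2)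
            ^ ((-(2*((b+1)*N)+(M:ℝ)-1) : ℝ) : ℂ))
      (fun q => P2L M (2*q.1*q.2)) (atTop ⊓ 𝓟 (Ssing b)) K ∧
    TendstoUniformlyOn
      (fun (N : ℕ) (q : ℂ × ℂ) =>
        ∑ k ∈ range N,
          Complex.Gamma ((((b+1)*N)+(M:ℝ)/2+1/2 : ℝ) : ℂ) /
            (Complex.Gamma ((k+(M:ℝ)/2+1 : ℝ) : ℂ) *
              Complex.Gamma ((((b+1)*N)-k+1/2 : ℝ) : ℂ)) *
          zet0 N ((b+1)*N) ((M:ℝ)/2) q.2 ^ (2*k+M) *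
          (1 + zet0 N ((b+1)*N) ((M:ℝ)/2) q.2 ^ 2)
            ^ ((-(((b+1)*N)+(M:ℝ)/2-1/2) : ℝ) : ℂ))
      (fun q => PLfun M q.2) (atTop ⊓ 𝓟 (Ssing b)) K ∧
    TendstoUniformlyOn
      (fun (N : ℕ) (q : ℂ × ℂ) =>
        ∑ k ∈ range N,
          Complex.Gamma ((((b+1)*N)+(M:ℝ)/2+1/2 : ℝ) : ℂ) /
            (Complex.Gamma ((k+(M:ℝ)/2+3/2 : ℝ) : ℂ) *
              Complex.Gamma ((((b+1)*N)-k : ℝ) : ℂ)) *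
          zet0 N ((b+1)*N) ((M:ℝ)/2) q.2 ^ (2*k+M+1) *
          (1 + zet0 N ((b+1)*N) ((M:ℝ)/2) q.2 ^ 2)
            ^ ((-(((b+1)*N)+(M:ℝ)/2-1/2) : ℝ) : ℂ))
      (fun q => PLhalf M ((M:ℝ)/2) q.2) (atTop ⊓ 𝓟 (Ssing b)) K := by
  have key : ∀ q ∈ K, Tendsto (fun r : ℕ × (ℂ × ℂ) => r.1)
      ((atTop ⊓ 𝓟 (Ssing b)) ×ˢ nhdsWithin q K) atTop := fun q _ =>
    tendsto_fst.mono_right inf_le_left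
  have key2 : ∀ q ∈ K, Tendsto (fun r : ℕ × (ℂ × ℂ) => r.2)
      ((atTop ⊓ 𝓟 (Ssing b)) ×ˢ nhdsWithin q K) (nhds q) := fun q _ =>
    tendsto_snd.mono_right nhdsWithin_le_nhds
  refine ⟨unif_aux _ K hK _ _ fun q hq => ?_, unif_aux _ K hK _ _ fun q hq => ?_,
    unif_aux _ K hK _ _ fun q hq => ?_⟩
  · have hG := key q hq
    have hq2 := key2 q hq
    generalize (atTop ⊓ 𝓟 (Ssing b)) ×ˢ nhdsWithin q K = G at hG hq2
    have h1 : Tendsto (fun r : ℕ × (ℂ × ℂ) => r.2.1) G (nhds q.1) :=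
      (continuous_fst.tendsto q).comp hq2
    have h2 : Tendsto (fun r : ℕ × (ℂ × ℂ) => r.2.2) G (nhds q.2) :=
      (continuous_snd.tendsto q).comp hq2
    have hX : Tendsto (fun r : ℕ × (ℂ × ℂ) => 2 * r.2.1 * r.2.2) G (nhds (2 * q.1 * q.2)) :=
      (h1.const_mul 2).mul h2
    have hMR : (1:ℝ) ≤ M := by exact_mod_cast hM1
    have hNR : Tendsto (fun r : ℕ × (ℂ × ℂ) => (r.1 : ℝ)) G atTop :=
      tendsto_natCast_atTop_atTop.comp hG
    have hTT : Tendsto (fun r : ℕ × (ℂ × ℂ) => 2*((b+1)*r.1) + (M:ℝ)) G atTop :=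
      tendsto_atTop_add_const_right _ _
        ((hNR.const_mul_atTop (by linarith : 0 < b + 1)).const_mul_atTop two_pos)
    have hc := core G (a := (M:ℝ)) (by positivity) (fun r => 2*((b+1)*r.1) + (M:ℝ))
      (fun r => 2*((b+1)*r.1) + (M:ℝ)) (fun r => 2 * r.1) (fun r => 2 * r.2.1 * r.2.2)
      (2 * q.1 * q.2) hTT ?_ (hTT.eventually_gt_atTop 0) ?_ ?_ hX
    · have hc2 := (hX.pow M).mul hc
      have e1 : P2L M (2 * q.1 * q.2) = (2 * q.1 * q.2) ^ M * ((1 / (Real.Gamma (M:ℝ) : ℂ)) *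
          ∫ s in (0:ℝ)..1, ((s ^ ((M:ℝ)-1) : ℝ) : ℂ) * Complex.exp (-(2 * q.1 * q.2) * s)) := by
        unfold P2L
        rw [Complex.Gamma_ofReal, div_eq_mul_one_div, mul_assoc]
        congr 3
        funext s
        rw [show (M:ℝ) - 1 = ((M-1 : ℕ) : ℝ) by rw [Nat.cast_sub hM1]; simp, Real.rpow_natCast]
        push_cast; rfl
      rw [e1]
      refine hc2.congr' ?_
      filter_upwards [hG.eventually_gt_atTop 0] with r hr
      rw [← mul_assoc, Finset.mul_sum, Finset.sum_mul]
      refine Finset.sum_congr rfl fun k _ => ?_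
      rw [zet_mul_aux b hb M r.1 hr, Complex.Gamma_ofReal,
        Complex.Gamma_ofReal, Complex.Gamma_ofReal,
        show 2*((b+1)*(r.1:ℝ)) + (M:ℝ) - M - k = 2*((b+1)*r.1) - k by ring,
        show (M:ℝ) + k = ((k + M : ℕ) : ℝ) by push_cast; ring, Real.rpow_natCast,
        Complex.ofReal_div, Complex.ofReal_div, Complex.ofReal_mul, Complex.ofReal_pow, div_pow]
      ring
    · refine tendsto_const_nhds.congr' ?_
      filter_upwards [hTT.eventually_gt_atTop 0] with r hr
      rw [div_self hr.ne']
    · exact tendsto_atTop_mono (fun r => by omega) hG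
    · refine Eventually.of_forall fun r k hk => ?_
      have : (k:ℝ) + 1 ≤ 2 * r.1 := by exact_mod_cast hk
      have : 0 ≤ b * r.1 := by positivity
      nlinarith
  · have h := half_case b hb M M hM1 (by omega) _ (key q hq) (fun q => q.2) q.2
      ((continuous_snd.tendsto q).comp (key2 q hq))
    unfold PLfun
    refine h.congr fun r => Finset.sum_congr rfl fun k _ => ?_
    rw [show (b+1)*(r.1:ℝ) + (M:ℝ)/2 + 1/2 - (M:ℝ)/2 - k = (b+1)*r.1 - k + 1/2 by ring]
  · have h := half_case b hb M (M+1) (by omega) le_rfl _ (key q hq) (fun q => q.2) q.2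
      ((continuous_snd.tendsto q).comp (key2 q hq))
    unfold PLhalf
    rw [show ((M+1 : ℕ) : ℝ)/2 = (M:ℝ)/2 + 1/2 by push_cast; ring,
      show (M:ℝ)/2 + 1/2 - 1 = (M:ℝ)/2 - 1/2 by ring] at h
    refine h.congr fun r => Finset.sum_congr rfl fun k _ => ?_
    rw [show (b+1)*(r.1:ℝ) + (M:ℝ)/2 + 1/2 - ((M:ℝ)/2 + 1/2) - k = (b+1)*r.1 - k by ring,
      show (k:ℝ) + ((M:ℝ)/2 + 1/2) + 1 = k + (M:ℝ)/2 + 3/2 by ring,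
      show 2*k + (M+1) = 2*k+M+1 by ring]

end SI
end
end
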